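/- arXiv:2001.01086 — 15 statements merged into one kernel-verified Lean document; each statement's English description precedes it below -/
import Mathlib

section
/- Let {W_n}_{n≥0} be a monic polynomial sequence over ℂ, let p, q, a ∈ ℂ and set ω(x) = x² + px + q. Then there exist unique sequences of polynomials {P_n}_{n≥0}, {R_n}_{n≥0}, {a_n}_{n≥0}, {b_n}_{n≥0} over ℂ such that P_n and R_n are monic of degree n, deg a_n ≤ n, deg b_n ≤ n, and, with the convention a_{−1} = 0, for every n ≥ 0: W_{2n}(x) = P_n(ω(x)) + (x − a)·a_{n−1}(ω(x)) and W_{2n+1}(x) = b_n(ω(x)) + (x − a)·R_n(ω(x)). -/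
/-!
Since `ω = X² + pX + q` is monic of degree two, repeated division by `ω` writes every polynomial of
degree `< 2n` as `A ∘ ω + (X - a) · (B ∘ ω)` with `deg A, deg B < n` (`exists_decomp`). The pair
`(A, B)` is unique, because a nonzero `A ∘ ω` has even degree while a nonzero `(X - a) · (B ∘ ω)` has
odd degree (`decomp_zero`, `decomp_unique`).

The monicity and degree claims come from subtracting the expected leading part first: `W₂ₙ - ωⁿ` has
degree `< 2n`, and so has `W₂ₙ₊₁ - (X - a) ωⁿ - c ωⁿ` for a suitable constant `c`; the powers of `ω`
are then put back as `Xⁿ`, composed with `ω`.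
-/

open Polynomial

/-- `prevP A n` is `A (n-1)` with the convention `A (-1) = 0`. -/
noncomputable def prevP (A : ℕ → Polynomial ℂ) : ℕ → Polynomial ℂ
  | 0 => 0
  | n + 1 => A n

lemma quad_monic (p q : ℂ) : (X ^ 2 + C p * X + C q : ℂ[X]).Monic := by
  monicity!

lemma quad_natDegree (p q : ℂ) : (X ^ 2 + C p * X + C q : ℂ[X]).natDegree = 2 := by
  compute_degree!

lemma decomp_zero {w A B : ℂ[X]} (hd : w.natDegree = 2) (a : ℂ)
    (h : A.comp w + (X - C a) * B.comp w = 0) : A = 0 ∧ B = 0 := by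
  have comp_zero : ∀ D : ℂ[X], D.comp w = 0 → D = 0 := by
    intro D hD
    rcases comp_eq_zero_iff.mp hD with h0 | ⟨-, h1⟩
    · exact h0
    · rw [h1, natDegree_C] at hd
      omega
  have hB : B = 0 := by
    by_contra hB
    have hBc : B.comp w ≠ 0 := fun h0 => hB (comp_zero B h0)
    have h1 : ((X - C a) * B.comp w).natDegree = (A.comp w).natDegree := by
      rw [eq_neg_of_add_eq_zero_left h, natDegree_neg]
    rw [natDegree_mul (X_sub_C_ne_zero a) hBc, natDegree_X_sub_C, natDegree_comp,
      natDegree_comp, hd] at h1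
    omega
  subst hB
  exact ⟨comp_zero A (by simpa using h), rfl⟩

lemma decomp_unique {w A B A' B' : ℂ[X]} (hd : w.natDegree = 2) (a : ℂ)
    (h : A.comp w + (X - C a) * B.comp w = A'.comp w + (X - C a) * B'.comp w) :
    A = A' ∧ B = B' := by
  have := decomp_zero (A := A - A') (B := B - B') hd a (by
    rw [sub_comp, sub_comp]
    linear_combination h)
  exact ⟨sub_eq_zero.mp this.1, sub_eq_zero.mp this.2⟩

lemma degree_X_mul_add_C_lt {A : ℂ[X]} {n : ℕ} (c : ℂ) (hA : A.degree < n) :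
    (X * A + C c).degree < ((n + 1 : ℕ) : WithBot ℕ) := by
  rw [degree_lt_iff_coeff_zero] at hA ⊢
  intro m hm
  obtain ⟨k, rfl⟩ : ∃ k, m = k + 1 := ⟨m - 1, by omega⟩
  simp [coeff_X_mul, hA k (by omega)]

lemma exists_decomp {w : ℂ[X]} (hw : w.Monic) (hd : w.natDegree = 2) (a : ℂ) (n : ℕ) :
    ∀ f : ℂ[X], f.degree < ((2 * n : ℕ) : WithBot ℕ) →
      ∃ A B : ℂ[X], A.degree < n ∧ B.degree < n ∧ f = A.comp w + (X - C a) * B.comp w := by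
  induction n with
  | zero =>
    intro f hf
    have : f = 0 := by simpa using hf
    exact ⟨0, 0, by simp, by simp, by simp [this]⟩
  | succ n ih =>
    intro f hf
    have hquot : (f /ₘ w).degree < ((2 * n : ℕ) : WithBot ℕ) := by
      by_cases h0 : f /ₘ w = 0
      · rw [h0, degree_zero]
        exact WithBot.bot_lt_coe _
      · rw [degree_eq_natDegree h0, natDegree_divByMonic f hw, hd]
        have hf0 : f ≠ 0 := by
          rintro rfl
          simp at h0
        rw [degree_eq_natDegree hf0] at hf
        have h1 : f.natDegree < 2 * (n + 1) := by exact_mod_cast hf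
        have h2 : 2 ≤ f.natDegree := by
          by_contra hlt
          exact h0 ((divByMonic_eq_zero_iff hw).mpr
            (degree_lt_degree (by omega)))
        have : f.natDegree - 2 < 2 * n := by omega
        exact_mod_cast this
    obtain ⟨A, B, hA, hB, hAB⟩ := ih _ hquot
    have hrem : (f %ₘ w).natDegree ≤ 1 := by
      have := natDegree_modByMonic_lt f hw (by
        rintro rfl
        simp at hd)
      omega
    obtain ⟨c, d, hr⟩ := exists_eq_X_add_C_of_natDegree_le_one hrem
    -- the linear remainder is `c X + d = (d + c a) + (X - a) c`
    refine ⟨X * A + C (d + c * a), X * B + C c, degree_X_mul_add_C_lt _ hA,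
      degree_X_mul_add_C_lt _ hB, ?_⟩
    have hdiv := modByMonic_add_div f w
    rw [hr, hAB] at hdiv
    simp only [add_comp, mul_comp, X_comp, C_comp, C_add, C_mul]
    linear_combination -hdiv

lemma monic_X_pow_add_of_degree_lt {A : ℂ[X]} {n : ℕ} (hA : A.degree < n) :
    (X ^ n + A).Monic ∧ (X ^ n + A).natDegree = n :=
  ⟨monic_X_pow_add hA,
    natDegree_eq_of_degree_eq_some (by
      rw [degree_add_eq_left_of_degree_lt (by rwa [degree_X_pow]), degree_X_pow])⟩

lemma exists_even {w : ℂ[X]} (hw : w.Monic) (hd : w.natDegree = 2) (a : ℂ) (n : ℕ) (f : ℂ[X])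
    (hf : f.Monic) (hfd : f.natDegree = 2 * n) :
    ∃ P B : ℂ[X], (P.Monic ∧ P.natDegree = n) ∧ B.degree < n ∧
      f = P.comp w + (X - C a) * B.comp w := by
  have hwn : (w ^ n).natDegree = 2 * n := by rw [hw.natDegree_pow, hd, mul_comm]
  have hdeg : (f - w ^ n).degree < ((2 * n : ℕ) : WithBot ℕ) := by
    have h1 : f.degree = ((2 * n : ℕ) : WithBot ℕ) := by
      rw [degree_eq_natDegree hf.ne_zero, hfd]
    rw [← h1]
    exact degree_sub_lt_left (by rw [h1, degree_eq_natDegree (hw.pow n).ne_zero, hwn]) hf.ne_zero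
      (by rw [hf.leadingCoeff, (hw.pow n).leadingCoeff])
  obtain ⟨A, B, hA, hB, h⟩ := exists_decomp hw hd a n _ hdeg
  refine ⟨X ^ n + A, B, monic_X_pow_add_of_degree_lt hA, hB, ?_⟩
  simp only [add_comp, pow_comp, X_comp]
  linear_combination h

lemma exists_odd {w : ℂ[X]} (hw : w.Monic) (hd : w.natDegree = 2) (a : ℂ) (n : ℕ) (f : ℂ[X])
    (hf : f.Monic) (hfd : f.natDegree = 2 * n + 1) :
    ∃ b R : ℂ[X], b.natDegree ≤ n ∧ (R.Monic ∧ R.natDegree = n) ∧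
      f = b.comp w + (X - C a) * R.comp w := by
  have hwn : (w ^ n).natDegree = 2 * n := by rw [hw.natDegree_pow, hd, mul_comm]
  have hg : ((X - C a) * w ^ n).Monic := (monic_X_sub_C a).mul (hw.pow n)
  have hgd : ((X - C a) * w ^ n).natDegree = 2 * n + 1 := by
    rw [(monic_X_sub_C a).natDegree_mul (hw.pow n), natDegree_X_sub_C, hwn, add_comm]
  -- `c` is chosen to cancel the coefficient of `X ^ (2 * n)`
  set c := (f - (X - C a) * w ^ n).coeff (2 * n) with hc
  have hdeg : (f - (X - C a) * w ^ n - C c * w ^ n).degree < ((2 * n : ℕ) : WithBot ℕ) := by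
    rw [degree_lt_iff_coeff_zero]
    intro m hm
    rcases (by omega : m = 2 * n ∨ m = 2 * n + 1 ∨ 2 * n + 1 < m) with rfl | rfl | hlt
    · have h1 : (w ^ n).coeff (2 * n) = 1 := by
        rw [← hwn]
        exact hw.pow n
      rw [coeff_sub, coeff_C_mul, h1, ← hc, mul_one, sub_self]
    · have h1 : f.coeff (2 * n + 1) = 1 := by
        rw [← hfd]
        exact hf
      have h2 : ((X - C a) * w ^ n).coeff (2 * n + 1) = 1 := by
        rw [← hgd]
        exact hg
      rw [coeff_sub, coeff_sub, coeff_C_mul, h1, h2,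
        coeff_eq_zero_of_natDegree_lt (by omega : (w ^ n).natDegree < 2 * n + 1)]
      ring
    · rw [coeff_sub, coeff_sub, coeff_C_mul,
        coeff_eq_zero_of_natDegree_lt (by omega : f.natDegree < m),
        coeff_eq_zero_of_natDegree_lt (by omega : ((X - C a) * w ^ n).natDegree < m),
        coeff_eq_zero_of_natDegree_lt (by omega : (w ^ n).natDegree < m)]
      ring
  obtain ⟨A, B, hA, hB, h⟩ := exists_decomp hw hd a n _ hdeg
  refine ⟨C c * X ^ n + A, X ^ n + B, ?_, monic_X_pow_add_of_degree_lt hB, ?_⟩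
  · exact natDegree_add_le_of_degree_le (natDegree_C_mul_X_pow_le c n)
      (natDegree_le_of_degree_le hA.le)
  · simp only [add_comp, mul_comp, C_comp, pow_comp, X_comp]
    linear_combination h

theorem stmt_0 (W : ℕ → Polynomial ℂ)
    (hW : ∀ n, (W n).Monic ∧ (W n).natDegree = n) (p q a : ℂ) :
    ∃! S : (ℕ → Polynomial ℂ) × (ℕ → Polynomial ℂ) × (ℕ → Polynomial ℂ) × (ℕ → Polynomial ℂ),
      (∀ n, (S.1 n).Monic ∧ (S.1 n).natDegree = n) ∧
      (∀ n, (S.2.1 n).Monic ∧ (S.2.1 n).natDegree = n) ∧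
      (∀ n, (S.2.2.1 n).natDegree ≤ n) ∧
      (∀ n, (S.2.2.2 n).natDegree ≤ n) ∧
      (∀ n, W (2*n) = (S.1 n).comp (X^2 + C p * X + C q)
        + (X - C a) * (prevP S.2.2.1 n).comp (X^2 + C p * X + C q)) ∧
      (∀ n, W (2*n+1) = (S.2.2.2 n).comp (X^2 + C p * X + C q)
        + (X - C a) * (S.2.1 n).comp (X^2 + C p * X + C q)) := by
  have hw := quad_monic p q
  have hd := quad_natDegree p q
  generalize (X ^ 2 + C p * X + C q : ℂ[X]) = w at hw hd ⊢
  choose P B hP hB hWe using fun n => exists_even hw hd a n _ (hW (2 * n)).1 (hW (2 * n)).2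
  choose b R hb hR hWo using fun n => exists_odd hw hd a n _ (hW (2 * n + 1)).1 (hW (2 * n + 1)).2
  -- `B n` plays the role of `a_{n-1}`; the degree bound forces `B 0 = 0`
  have hprev : ∀ n, prevP (fun k => B (k + 1)) n = B n := by
    intro n
    cases n with
    | zero =>
      have : B 0 = 0 := by simpa using hB 0
      rw [this]
      rfl
    | succ n => rfl
  refine ⟨(P, R, fun k => B (k + 1), b), ⟨hP, hR, ?_, hb, ?_, hWo⟩, ?_⟩
  · intro n
    rw [natDegree_le_iff_degree_le]
    exact degree_le_of_natDegree_le (Nat.lt_succ_iff.mp (by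
      rcases eq_or_ne (B (n + 1)) 0 with h0 | h0
      · simp [h0]
      · exact (natDegree_lt_iff_degree_lt h0).mpr (hB (n + 1))))
  · intro n
    simpa only [hprev] using hWe n
  · rintro ⟨P', R', A', b'⟩ ⟨-, -, -, -, he, ho⟩
    have hE := fun n => decomp_unique hd a ((he n).symm.trans (hWe n))
    have hO := fun n => decomp_unique hd a ((ho n).symm.trans (hWo n))
    simp only [Prod.mk.injEq]
    exact ⟨funext fun n => (hE n).1, funext fun n => (hO n).2,
      funext fun n => (hE (n + 1)).2, funext fun n => (hO n).1⟩
end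

section
/- Let {W_n}_{n≥0} be a monic polynomial sequence over ℂ with structure coefficients β_n and χ_{n,ν}, let p, q, a ∈ ℂ, ω(x) = x² + px + q, and let {P_n}, {R_n} be MPSs and {a_n}, {b_n} be sequences of polynomials with deg a_n ≤ n, deg b_n ≤ n and the convention a_{−1} = 0. Then the quadratic-decomposition equations W_{2n}(x) = P_n(ω(x)) + (x − a)a_{n−1}(ω(x)) and W_{2n+1}(x) = b_n(ω(x)) + (x − a)R_n(ω(x)) hold for all n ≥ 0 if and only if the following recurrences hold for all n ≥ 0: (i) b_0(x) = a − β_0; (ii) P_{n+1}(x) = −Σ_{ν=0}^{n} χ_{2n,2ν} P_ν(x) + (x − ω(a)) R_n(x) + (a − β_{2n+1}) b_n(x) − Σ_{ν=0}^{n−1} χ_{2n,2ν+1} b_ν(x); (iii) a_n(x) = −Σ_{ν=0}^{n} χ_{2n,2ν} a_{ν−1}(x) − (a + p + β_{2n+1}) R_n(x) + b_n(x) − Σ_{ν=0}^{n−1} χ_{2n,2ν+1} R_ν(x); (iv) b_{n+1}(x) = −Σ_{ν=0}^{n} χ_{2n+1,2ν+1} b_ν(x) + (a − β_{2n+2}) P_{n+1}(x)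 + (x − ω(a)) a_n(x) − Σ_{ν=0}^{n} χ_{2n+1,2ν} P_ν(x); (v) R_{n+1}(x) = −Σ_{ν=0}^{n} χ_{2n+1,2ν+1} R_ν(x) + P_{n+1}(x) − (a + p + β_{2n+2}) a_n(x) − Σ_{ν=0}^{n} χ_{2n+1,2ν} a_{ν−1}(x). -/
/-!
Write `ω = X² + pX + q`, `D(f, g) = f(ω) + (X - a) g(ω)`. Since `ω` has degree two, `f(ω)` has even
degree while `(X - a) g(ω)` has odd degree, so `D` is injective (`qdec_inj`). From
`X (X - a) = ω - ω(a) - (a + p)(X - a)` multiplication by `X` acts on pairs as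
`(f, g) ↦ (a f + (x - ω(a)) g, f - (a + p) g)` (`X_mul_qdec`).

Solving the structure relation for its leading term and splitting the sum by parity, the
decomposition of `W_0, …, W_{m+1}` gives one of `W_{m+2}`, whose components are exactly the
right-hand sides of the recurrences (`step_even`, `step_odd`). Injectivity then turns the
decomposition equations into the recurrences; conversely the recurrences propagate the
decomposition by induction, starting from `W_0 = 1` and `W_1 = X - β_0`.
-/

open Polynomial

/-- The polynomial `f(ω(x)) + (x - a) g(ω(x))` with `ω(x) = x² + p x + q`. -/
noncomputable def qdec (p q a : ℂ) (f g : Polynomial ℂ) : Polynomial ℂ :=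
  f.comp (X^2 + C p * X + C q) + (X - C a) * g.comp (X^2 + C p * X + C q)

lemma natDegree_omega (p q : ℂ) : (X^2 + C p * X + C q : Polynomial ℂ).natDegree = 2 := by
  compute_degree!

lemma qdec_eq_zero {p q a : ℂ} {f g : Polynomial ℂ} (h : qdec p q a f g = 0) :
    f = 0 ∧ g = 0 := by
  have hω := natDegree_omega p q
  have comp_zero : ∀ r : Polynomial ℂ, r.comp (X^2 + C p * X + C q) = 0 → r = 0 := by
    intro r hr
    rcases Polynomial.comp_eq_zero_iff.1 hr with h0 | ⟨_, h1⟩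
    · exact h0
    · rw [h1, natDegree_C] at hω
      omega
  unfold qdec at h
  have hg : g = 0 := by
    by_contra hg
    have hgc : g.comp (X^2 + C p * X + C q) ≠ 0 := fun h0 => hg (comp_zero g h0)
    have hd := congrArg natDegree (eq_neg_of_add_eq_zero_left h)
    rw [natDegree_neg, natDegree_mul (X_sub_C_ne_zero a) hgc, natDegree_comp, natDegree_comp,
      hω, natDegree_X_sub_C] at hd
    -- even degree on the left, odd degree on the right
    omega
  refine ⟨comp_zero f ?_, hg⟩
  simpa [hg] using h

lemma qdec_sub (p q a : ℂ) (f g f' g' : Polynomial ℂ) :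
    qdec p q a f g - qdec p q a f' g' = qdec p q a (f - f') (g - g') := by
  simp only [qdec, sub_comp]
  ring

lemma qdec_add (p q a : ℂ) (f g f' g' : Polynomial ℂ) :
    qdec p q a f g + qdec p q a f' g' = qdec p q a (f + f') (g + g') := by
  simp only [qdec, add_comp]
  ring

lemma C_mul_qdec (p q a c : ℂ) (f g : Polynomial ℂ) :
    C c * qdec p q a f g = qdec p q a (C c * f) (C c * g) := by
  simp only [qdec, mul_comp, C_comp]
  ring

lemma X_mul_qdec (p q a : ℂ) (f g : Polynomial ℂ) :
    X * qdec p q a f g =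
      qdec p q a (C a * f + (X - C (a^2 + p*a + q)) * g) (f - C (a + p) * g) := by
  simp only [qdec, mul_comp, C_comp, add_comp, sub_comp, X_comp, C_add, C_mul, C_pow, pow_comp]
  ring

lemma qdec_sum (p q a : ℂ) (c : ℕ → ℂ) (F G : ℕ → Polynomial ℂ) (n : ℕ) :
    ∑ ν ∈ Finset.range n, C (c ν) * qdec p q a (F ν) (G ν) =
      qdec p q a (∑ ν ∈ Finset.range n, C (c ν) * F ν)
        (∑ ν ∈ Finset.range n, C (c ν) * G ν) := by
  induction n with
  | zero => simp [qdec]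
  | succ n ih => rw [Finset.sum_range_succ, ih, C_mul_qdec, qdec_add,
      Finset.sum_range_succ, Finset.sum_range_succ]

lemma qdec_inj {p q a : ℂ} {f g f' g' : Polynomial ℂ}
    (h : qdec p q a f g = qdec p q a f' g') : f = f' ∧ g = g' := by
  rw [← sub_eq_zero, qdec_sub] at h
  exact ⟨sub_eq_zero.1 (qdec_eq_zero h).1, sub_eq_zero.1 (qdec_eq_zero h).2⟩

lemma sum_range_even (f : ℕ → Polynomial ℂ) (n : ℕ) :
    ∑ ν ∈ Finset.range (2*n), f ν =
      ∑ ν ∈ Finset.range n, f (2*ν) + ∑ ν ∈ Finset.range n, f (2*ν+1) := by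
  induction n with
  | zero => simp
  | succ n ih =>
    rw [show 2*(n+1) = 2*n+1+1 by ring, Finset.sum_range_succ, Finset.sum_range_succ, ih,
      Finset.sum_range_succ, Finset.sum_range_succ]
    ring

section Step

variable {W : ℕ → Polynomial ℂ} {β : ℕ → ℂ} {χ : ℕ → ℕ → ℂ} {p q a : ℂ}
  {P R A B : ℕ → Polynomial ℂ}

/-- The structure relation expresses `W_{2n+2}` through the components of `W_0, …, W_{2n+1}`. -/
lemma step_even
    (hstruct : ∀ n, X * W (n+1) = W (n+2) + C (β (n+1)) * W (n+1)
        + ∑ ν ∈ Finset.range (n+1), C (χ n ν) * W ν) (n : ℕ)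
    (he : ∀ ν ≤ n, W (2*ν) = qdec p q a (P ν) (prevP A ν))
    (ho : ∀ ν ≤ n, W (2*ν+1) = qdec p q a (B ν) (R ν)) :
    W (2*(n+1)) = qdec p q a
      (-(∑ ν ∈ Finset.range (n+1), C (χ (2*n) (2*ν)) * P ν)
        + (X - C (a^2 + p*a + q)) * R n + C (a - β (2*n+1)) * B n
        - ∑ ν ∈ Finset.range n, C (χ (2*n) (2*ν+1)) * B ν)
      (-(∑ ν ∈ Finset.range (n+1), C (χ (2*n) (2*ν)) * prevP A ν)
        - C (a + p + β (2*n+1)) * R n + B n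
        - ∑ ν ∈ Finset.range n, C (χ (2*n) (2*ν+1)) * R ν) := by
  have hs : ∑ ν ∈ Finset.range (2*n+1), C (χ (2*n) ν) * W ν =
      ∑ ν ∈ Finset.range (n+1), C (χ (2*n) (2*ν)) * qdec p q a (P ν) (prevP A ν)
      + ∑ ν ∈ Finset.range n, C (χ (2*n) (2*ν+1)) * qdec p q a (B ν) (R ν) := by
    rw [Finset.sum_range_succ, sum_range_even, add_right_comm,
      ← Finset.sum_range_succ (fun ν => C (χ (2*n) (2*ν)) * W (2*ν))]
    congr 1
    · exact Finset.sum_congr rfl fun ν hν => by rw [he ν (by simp at hν; omega)]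
    · exact Finset.sum_congr rfl fun ν hν => by rw [ho ν (by simp at hν; omega)]
  have h := hstruct (2*n)
  rw [hs, qdec_sum, qdec_sum, qdec_add, ho n le_rfl, X_mul_qdec, C_mul_qdec, add_assoc (W _),
    qdec_add] at h
  rw [show 2*(n+1) = 2*n+2 by ring, eq_sub_of_add_eq h.symm, qdec_sub]
  congr 1 <;> simp only [C_add, C_sub] <;> ring

/-- The structure relation expresses `W_{2n+3}` through the components of `W_0, …, W_{2n+2}`. -/
lemma step_odd
    (hstruct : ∀ n, X * W (n+1) = W (n+2) + C (β (n+1)) * W (n+1)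
        + ∑ ν ∈ Finset.range (n+1), C (χ n ν) * W ν) (n : ℕ)
    (he : ∀ ν ≤ n+1, W (2*ν) = qdec p q a (P ν) (prevP A ν))
    (ho : ∀ ν ≤ n, W (2*ν+1) = qdec p q a (B ν) (R ν)) :
    W (2*(n+1)+1) = qdec p q a
      (-(∑ ν ∈ Finset.range (n+1), C (χ (2*n+1) (2*ν+1)) * B ν)
        + C (a - β (2*n+2)) * P (n+1) + (X - C (a^2 + p*a + q)) * A n
        - ∑ ν ∈ Finset.range (n+1), C (χ (2*n+1) (2*ν)) * P ν)
      (-(∑ ν ∈ Finset.range (n+1), C (χ (2*n+1) (2*ν+1)) * R ν)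
        + P (n+1) - C (a + p + β (2*n+2)) * A n
        - ∑ ν ∈ Finset.range (n+1), C (χ (2*n+1) (2*ν)) * prevP A ν) := by
  have hs : ∑ ν ∈ Finset.range (2*n+1+1), C (χ (2*n+1) ν) * W ν =
      ∑ ν ∈ Finset.range (n+1), C (χ (2*n+1) (2*ν)) * qdec p q a (P ν) (prevP A ν)
      + ∑ ν ∈ Finset.range (n+1), C (χ (2*n+1) (2*ν+1)) * qdec p q a (B ν) (R ν) := by
    rw [show 2*n+1+1 = 2*(n+1) by ring, sum_range_even]
    congr 1
    · exact Finset.sum_congr rfl fun ν hν => by rw [he ν (by simp at hν; omega)]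
    · exact Finset.sum_congr rfl fun ν hν => by rw [ho ν (by simp at hν; omega)]
  have hlast : W (2*n+1+1) = qdec p q a (P (n+1)) (A n) := he (n+1) le_rfl
  have h := hstruct (2*n+1)
  rw [hs, qdec_sum, qdec_sum, qdec_add, hlast, X_mul_qdec, C_mul_qdec, add_assoc (W _),
    qdec_add] at h
  rw [show 2*(n+1)+1 = 2*n+1+2 by ring, eq_sub_of_add_eq h.symm, qdec_sub]
  congr 1 <;> simp only [C_add, C_sub] <;> ring

end Step

theorem stmt_1 (W : ℕ → Polynomial ℂ)
    (hW : ∀ n, (W n).Monic ∧ (W n).natDegree = n)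
    (β : ℕ → ℂ) (χ : ℕ → ℕ → ℂ)
    (hW0 : W 0 = 1) (hW1 : W 1 = X - C (β 0))
    (hstruct : ∀ n, X * W (n+1) = W (n+2) + C (β (n+1)) * W (n+1)
        + ∑ ν ∈ Finset.range (n+1), C (χ n ν) * W ν)
    (p q a : ℂ)
    (P R A B : ℕ → Polynomial ℂ)
    (hP : ∀ n, (P n).Monic ∧ (P n).natDegree = n)
    (hR : ∀ n, (R n).Monic ∧ (R n).natDegree = n)
    (hA : ∀ n, (A n).natDegree ≤ n)
    (hB : ∀ n, (B n).natDegree ≤ n) :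
    ((∀ n, W (2*n) = (P n).comp (X^2 + C p * X + C q)
        + (X - C a) * (prevP A n).comp (X^2 + C p * X + C q)) ∧
     (∀ n, W (2*n+1) = (B n).comp (X^2 + C p * X + C q)
        + (X - C a) * (R n).comp (X^2 + C p * X + C q)))
    ↔
    (B 0 = C (a - β 0) ∧
     (∀ n, P (n+1) = -(∑ ν ∈ Finset.range (n+1), C (χ (2*n) (2*ν)) * P ν)
        + (X - C (a^2 + p*a + q)) * R n + C (a - β (2*n+1)) * B n
        - ∑ ν ∈ Finset.range n, C (χ (2*n) (2*ν+1)) * B ν) ∧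
     (∀ n, A n = -(∑ ν ∈ Finset.range (n+1), C (χ (2*n) (2*ν)) * prevP A ν)
        - C (a + p + β (2*n+1)) * R n + B n
        - ∑ ν ∈ Finset.range n, C (χ (2*n) (2*ν+1)) * R ν) ∧
     (∀ n, B (n+1) = -(∑ ν ∈ Finset.range (n+1), C (χ (2*n+1) (2*ν+1)) * B ν)
        + C (a - β (2*n+2)) * P (n+1) + (X - C (a^2 + p*a + q)) * A n
        - ∑ ν ∈ Finset.range (n+1), C (χ (2*n+1) (2*ν)) * P ν) ∧
     (∀ n, R (n+1) = -(∑ ν ∈ Finset.range (n+1), C (χ (2*n+1) (2*ν+1)) * R ν)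
        + P (n+1) - C (a + p + β (2*n+2)) * A n
        - ∑ ν ∈ Finset.range (n+1), C (χ (2*n+1) (2*ν)) * prevP A ν)) := by
  have hP0 : P 0 = 1 := eq_one_of_monic_natDegree_zero (hP 0).1 (hP 0).2
  have hR0 : R 0 = 1 := eq_one_of_monic_natDegree_zero (hR 0).1 (hR 0).2
  have hW1' : W 1 = qdec p q a (C (a - β 0)) (R 0) := by
    simp [qdec, hW1, hR0]
  change ((∀ n, W (2*n) = qdec p q a (P n) (prevP A n)) ∧
    (∀ n, W (2*n+1) = qdec p q a (B n) (R n))) ↔ _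
  constructor
  · rintro ⟨he, ho⟩
    have hE := fun n => qdec_inj ((he (n+1)).symm.trans
      (step_even hstruct n (fun ν _ => he ν) (fun ν _ => ho ν)))
    have hO := fun n => qdec_inj ((ho (n+1)).symm.trans
      (step_odd hstruct n (fun ν _ => he ν) (fun ν _ => ho ν)))
    exact ⟨(qdec_inj ((ho 0).symm.trans hW1')).1, fun n => (hE n).1, fun n => (hE n).2,
      fun n => (hO n).1, fun n => (hO n).2⟩
  · rintro ⟨h0, h1, h2, h3, h4⟩
    have key : ∀ n, (∀ ν ≤ n, W (2*ν) = qdec p q a (P ν) (prevP A ν)) ∧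
        (∀ ν ≤ n, W (2*ν+1) = qdec p q a (B ν) (R ν)) := by
      intro n
      induction n with
      | zero =>
        constructor <;> intro ν hν <;> obtain rfl := Nat.le_zero.1 hν
        · simp [qdec, prevP, hW0, hP0]
        · rw [h0]
          exact hW1'
      | succ n ih =>
        obtain ⟨he, ho⟩ := ih
        have hE : W (2*(n+1)) = qdec p q a (P (n+1)) (prevP A (n+1)) := by
          rw [step_even hstruct n he ho, ← h1, ← h2, prevP]
        have he' : ∀ ν ≤ n+1, W (2*ν) = qdec p q a (P ν) (prevP A ν) := by
          intro ν hν
          rcases Nat.le_succ_iff.1 hν with h | rfl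
          · exact he ν h
          · exact hE
        refine ⟨he', fun ν hν => ?_⟩
        rcases Nat.le_succ_iff.1 hν with h | rfl
        · exact ho ν h
        · rw [Nat.succ_eq_add_one, step_odd hstruct n he' ho, ← h3, ← h4]
    exact ⟨fun n => (key n).1 n le_rfl, fun n => (key n).2 n le_rfl⟩
end

section
/- Let {W_n}_{n≥0} be a 2-orthogonal monic polynomial sequence over ℂ (so it satisfies a third-order recurrence with coefficients β_n, α_n, γ_n where γ_n ≠ 0 for all n ≥ 1), let p, q, a ∈ ℂ, and let {P_n}, {R_n}, {a_n}, {b_n} be its general quadratic decomposition with respect to ω(x) = x² + px + q and a. Then the decomposition is not diagonal; that is, it is impossible that a_n = 0 and b_n = 0 for all n ≥ 0. -/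
/-!
In a diagonal decomposition `W 1 = X - a`, `W 2 = ω + c` and `W 3 = (X - a) * (ω + d)`, where
`ω = X ^ 2 + p X + q`. Substituting into the recurrence for `W 3` gives
`(X - a) * (d - c + α 2) = (a - β 2) * (ω + c) - γ 1`.
Comparing coefficients of `X ^ 2`, then `X`, then `1` yields `a = β 2`, `d - c + α 2 = 0` and finally
`γ 1 = 0`, contradicting the regularity condition `γ 1 ≠ 0`.
-/

open Polynomial

theorem stmt_2 (W : ℕ → Polynomial ℂ) (β α γ : ℕ → ℂ)
    (hγ : ∀ n, 1 ≤ n → γ n ≠ 0)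
    (hW0 : W 0 = 1) (hW1 : W 1 = X - C (β 0))
    (hW2 : W 2 = (X - C (β 1)) * W 1 - C (α 1))
    (hWrec : ∀ n, W (n+3) = (X - C (β (n+2))) * W (n+2)
        - C (α (n+2)) * W (n+1) - C (γ (n+1)) * W n)
    (p q a : ℂ) (P R A B : ℕ → Polynomial ℂ)
    (hP : ∀ n, (P n).Monic ∧ (P n).natDegree = n)
    (hR : ∀ n, (R n).Monic ∧ (R n).natDegree = n)
    (hA : ∀ n, (A n).natDegree ≤ n)
    (hB : ∀ n, (B n).natDegree ≤ n)
    (hQDe : ∀ n, W (2*n) = (P n).comp (X^2 + C p * X + C q)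
        + (X - C a) * (prevP A n).comp (X^2 + C p * X + C q))
    (hQDo : ∀ n, W (2*n+1) = (B n).comp (X^2 + C p * X + C q)
        + (X - C a) * (R n).comp (X^2 + C p * X + C q)) :
    ¬ (∀ n, A n = 0 ∧ B n = 0) := by
  intro h
  have hP1 := (hP 1).1.eq_X_add_C (hP 1).2
  have hR1 := (hR 1).1.eq_X_add_C (hR 1).2
  have hR0 := (Monic.natDegree_eq_zero (hR 0).1).mp (hR 0).2
  have e1 : W 1 = X - C a := by simpa [(h 0).2, hR0] using hQDo 0
  have e2 : W 2 = X ^ 2 + C p * X + C q + C ((P 1).coeff 0) := by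
    have := hQDe 1
    rw [hP1] at this
    simpa [prevP, (h 0).1] using this
  have e3 : W 3 = (X - C a) * (X ^ 2 + C p * X + C q + C ((R 1).coeff 0)) := by
    have := hQDo 1
    rw [hR1] at this
    simpa [(h 1).2] using this
  have e := hWrec 0
  simp only [Nat.zero_add, hW0, e1, e2, e3] at e
  generalize (P 1).coeff 0 = c at e
  generalize (R 1).coeff 0 = d at e
  have key (x : ℂ) : (x - a) * (d - c + α 2) = (a - β 2) * (x ^ 2 + p * x + q + c) - γ 1 := by
    have := congrArg (eval x) e
    simp at this
    linear_combination this
  -- The second difference isolates the coefficient of `X ^ 2`, the first difference that of `X`.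
  have hβ : a - β 2 = 0 := by
    linear_combination -(key 1 + key (-1) - 2 * key 0) / 2
  have hk : d - c + α 2 = 0 := by
    linear_combination key 1 - key 0 + (1 + p) * hβ
  refine hγ 1 le_rfl ?_
  linear_combination key 0 + (q + c) * hβ + a * hk
end

section
/- Let {W_n}_{n≥0} be a monic polynomial sequence over ℂ with structure coefficients β_n and χ_{n,ν}, and define its derivative sequence W^{[1]}_n(x) = (n+1)^{−1}·(W_{n+1})'(x). Then W^{[1]}_0(x) = 1, W^{[1]}_1(x) = x − (β_0 + β_1)/2, and for every n ≥ 1: W^{[1]}_n(x) = W_n(x)/(n+1) + (n/(n+1))·(x − β_n)·W^{[1]}_{n−1}(x) − (1/(n+1))·Σ_{ν=1}^{n−1} ν·χ_{n−1,ν}·W^{[1]}_{ν−1}(x). -/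
/-!
Differentiating the structure relation gives
`W (m+2)' = W (m+1) + (X - β (m+1)) * W (m+1)' - ∑ ν ≤ m, χ m ν * W ν'`.
The term `ν = 0` vanishes because `W 0 = 1`, and substituting
`W (ν+1)' = (ν+1) * W1 ν` and dividing by `m + 2` yields the recurrence.
The formula for `W1 1` is the case `m = 0`.
-/

open Polynomial

theorem stmt_3 (W : ℕ → Polynomial ℂ)
    (hW : ∀ n, (W n).Monic ∧ (W n).natDegree = n)
    (β : ℕ → ℂ) (χ : ℕ → ℕ → ℂ)
    (hW0 : W 0 = 1) (hW1 : W 1 = X - C (β 0))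
    (hstruct : ∀ n, X * W (n+1) = W (n+2) + C (β (n+1)) * W (n+1)
        + ∑ ν ∈ Finset.range (n+1), C (χ n ν) * W ν)
    (W1 : ℕ → Polynomial ℂ)
    (hW1def : ∀ n, W1 n = C (((n : ℂ) + 1)⁻¹) * derivative (W (n+1))) :
    W1 0 = 1 ∧ W1 1 = X - C ((β 0 + β 1) / 2) ∧
    ∀ m : ℕ, W1 (m+1) = C (((m : ℂ) + 2)⁻¹) * W (m+1)
      + C (((m : ℂ) + 1) / ((m : ℂ) + 2)) * ((X - C (β (m+1))) * W1 m)
      - C (((m : ℂ) + 2)⁻¹) *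
          ∑ ν ∈ Finset.range m, C (((ν : ℂ) + 1) * χ m (ν+1)) * W1 ν := by
  have hder : ∀ n, derivative (W (n+1)) = C ((n : ℂ) + 1) * W1 n := by
    intro n
    have hn : (n : ℂ) + 1 ≠ 0 := Nat.cast_add_one_ne_zero n
    rw [hW1def, ← mul_assoc, ← C_mul, mul_inv_cancel₀ hn, C_1, one_mul]
  have h0 : W1 0 = 1 := by simp [hW1def, hW1]
  have hrec : ∀ m : ℕ, W1 (m+1) = C (((m : ℂ) + 2)⁻¹) * W (m+1)
      + C (((m : ℂ) + 1) / ((m : ℂ) + 2)) * ((X - C (β (m+1))) * W1 m)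
      - C (((m : ℂ) + 2)⁻¹) *
          ∑ ν ∈ Finset.range m, C (((ν : ℂ) + 1) * χ m (ν+1)) * W1 ν := by
    intro m
    have hsum : derivative (∑ ν ∈ Finset.range (m+1), C (χ m ν) * W ν)
        = ∑ ν ∈ Finset.range m, C (((ν : ℂ) + 1) * χ m (ν+1)) * W1 ν := by
      rw [Finset.sum_range_succ', derivative_add, derivative_sum, hW0]
      simp only [derivative_C_mul, derivative_one, mul_zero, add_zero, hder]
      refine Finset.sum_congr rfl fun ν _ => ?_
      rw [C_mul]
      ring
    have h := congrArg derivative (hstruct m)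
    rw [derivative_add, derivative_add, hsum, derivative_mul, derivative_X,
      derivative_C_mul, hder m] at h
    have hcast : ((m + 1 : ℕ) : ℂ) + 1 = (m : ℂ) + 2 := by push_cast; ring
    rw [hW1def (m+1), hcast, div_eq_mul_inv, C_mul]
    linear_combination (-C (((m : ℂ) + 2)⁻¹)) * h
  refine ⟨h0, ?_, hrec⟩
  have h1 := hrec 0
  have h2 : C (2⁻¹ : ℂ) * 2 = 1 := by
    rw [← C_ofNat, ← C_mul]
    norm_num
  simp only [Nat.cast_zero, zero_add, Finset.range_zero, Finset.sum_empty, mul_zero,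
    sub_zero, hW1, h0, one_div, mul_one] at h1
  rw [h1, div_eq_mul_inv, C_mul, C_add]
  linear_combination X * h2
end

section
/- Let {W_n}_{n≥0} be a 2-orthogonal monic polynomial sequence over ℂ with recurrence coefficients β_n, α_n, γ_n, let p, q, a ∈ ℂ, ω(x) = x² + px + q, and let {P_n}, {R_n}, {a_n}, {b_n} be its general quadratic decomposition (with the conventions a_{−1} = a_{−2} = 0 and R_{−1} = 0). Then for every n ≥ 1: a_{n+1}(x) − (x − ω(a) + (a − β_{2n+2})(a + p + β_{2n+2}) − α_{2n+3} − α_{2n+2})·a_n(x) + (α_{2n+2}α_{2n+1} + γ_{2n+1}(p + β_{2n+2} + β_{2n}))·a_{n−1}(x) + γ_{2n+1}γ_{2n−1}·a_{n−2}(x) + (p + β_{2n+3} + β_{2n+2})·R_{n+1}(x) + (γ_{2n+2} + γ_{2n+1} + α_{2n+2}(p + β_{2n+2} + β_{2n+1}))·R_n(x) + (α_{2n+2}γ_{2n} + γ_{2n+1}α_{2n})·R_{n−1}(x) = 0. -/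
/-!
Every polynomial has at most one representation `u(ω) + (x - a) v(ω)`: the reflection
`x ↦ -p - x` fixes `ω`, so the difference of a vanishing representation and its reflection is
`(2x + p) v(ω) = 0` (`qd_zero`). Since `(x - a)² = ω - ω(a) - (p + 2a)(x - a)`, multiplication by
`x - β` acts on the components by
`(u, v) ↦ ((a - β) u + (ω - ω(a)) v, u - (a + p + β) v)`, so the recurrence for `W` splits into two
recurrences for the components (`qd_step`). Applying this to four consecutive recurrences
and eliminating the components `P` and `B` gives the relation between `A` and `R` alone.
-/

open Polynomial

/-- Uniqueness of the quadratic decomposition, in homogeneous form. -/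
theorem qd_zero (p q a : ℂ) (u v : ℂ[X])
    (h : u.comp (X^2 + C p * X + C q) + (X - C a) * v.comp (X^2 + C p * X + C q) = 0) :
    u = 0 ∧ v = 0 := by
  have hω : (X^2 + C p * X + C q : ℂ[X]).natDegree = 2 := by
    simpa using natDegree_quadratic (a := (1 : ℂ)) (b := p) (c := q) one_ne_zero
  have key : ∀ w : ℂ[X], w.comp (X^2 + C p * X + C q) = 0 → w = 0 := by
    intro w hw
    rcases comp_eq_zero_iff.mp hw with h0 | ⟨_, h1⟩
    · exact h0
    · rw [h1, natDegree_C] at hω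
      omega
  -- The reflection `x ↦ -p - x` leaves `ω` invariant.
  have hrefl : (X^2 + C p * X + C q : ℂ[X]).comp (-C p - X) = X^2 + C p * X + C q := by
    simp only [add_comp, pow_comp, mul_comp, X_comp, C_comp]
    ring
  have h2 := congrArg (fun f : ℂ[X] => f.comp (-C p - X)) h
  simp only [add_comp, mul_comp, sub_comp, comp_assoc, hrefl, X_comp, C_comp, zero_comp] at h2
  have h3 : (C 2 * X + C p) * v.comp (X^2 + C p * X + C q) = 0 := by
    have : (C 2 : ℂ[X]) = 2 := rfl
    rw [this]
    linear_combination h - h2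
  have hlin : (C 2 * X + C p : ℂ[X]) ≠ 0 := by
    intro h0
    have := congrArg (fun f : ℂ[X] => f.coeff 1) h0
    simp [coeff_C] at this
  have hv := (mul_eq_zero.mp h3).resolve_left hlin
  exact ⟨key u (by simpa [hv] using h), key v hv⟩

/-- A four-term recurrence between decomposed polynomials, read off on their components. -/
theorem qd_step (p q a b c d : ℂ) (W₀ W₁ W₂ W₃ u₀ v₀ u₁ v₁ u₂ v₂ u₃ v₃ : ℂ[X])
    (h₀ : W₀ = u₀.comp (X^2 + C p * X + C q) + (X - C a) * v₀.comp (X^2 + C p * X + C q))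
    (h₁ : W₁ = u₁.comp (X^2 + C p * X + C q) + (X - C a) * v₁.comp (X^2 + C p * X + C q))
    (h₂ : W₂ = u₂.comp (X^2 + C p * X + C q) + (X - C a) * v₂.comp (X^2 + C p * X + C q))
    (h₃ : W₃ = u₃.comp (X^2 + C p * X + C q) + (X - C a) * v₃.comp (X^2 + C p * X + C q))
    (h : W₃ = (X - C b) * W₂ - C c * W₁ - C d * W₀) :
    u₃ = (C a - C b) * u₂ + (X - (C a ^ 2 + C p * C a + C q)) * v₂ - C c * u₁ - C d * u₀ ∧
    v₃ = u₂ - (C a + C p + C b) * v₂ - C c * v₁ - C d * v₀ := by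
  have := qd_zero p q a
    (u₃ - ((C a - C b) * u₂ + (X - (C a ^ 2 + C p * C a + C q)) * v₂ - C c * u₁ - C d * u₀))
    (v₃ - (u₂ - (C a + C p + C b) * v₂ - C c * v₁ - C d * v₀)) (by
      simp only [add_comp, sub_comp, mul_comp, pow_comp, X_comp, C_comp]
      rw [h₀, h₁, h₂, h₃] at h
      linear_combination h)
  exact ⟨sub_eq_zero.mp this.1, sub_eq_zero.mp this.2⟩

theorem stmt_4 (W : ℕ → Polynomial ℂ) (β α γ : ℕ → ℂ)
    (hγ : ∀ n, 1 ≤ n → γ n ≠ 0)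
    (hW0 : W 0 = 1) (hW1 : W 1 = X - C (β 0))
    (hW2 : W 2 = (X - C (β 1)) * W 1 - C (α 1))
    (hWrec : ∀ n, W (n+3) = (X - C (β (n+2))) * W (n+2)
        - C (α (n+2)) * W (n+1) - C (γ (n+1)) * W n)
    (p q a : ℂ) (P R A B : ℕ → Polynomial ℂ)
    (hP : ∀ n, (P n).Monic ∧ (P n).natDegree = n)
    (hR : ∀ n, (R n).Monic ∧ (R n).natDegree = n)
    (hA : ∀ n, (A n).natDegree ≤ n)
    (hB : ∀ n, (B n).natDegree ≤ n)
    (hQDe : ∀ n, W (2*n) = (P n).comp (X^2 + C p * X + C q)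
        + (X - C a) * (prevP A n).comp (X^2 + C p * X + C q))
    (hQDo : ∀ n, W (2*n+1) = (B n).comp (X^2 + C p * X + C q)
        + (X - C a) * (R n).comp (X^2 + C p * X + C q)) :
    ∀ m : ℕ,
      A (m+2)
      - (X - C (a^2 + p*a + q)
          + C ((a - β (2*m+4)) * (a + p + β (2*m+4)) - α (2*m+5) - α (2*m+4))) * A (m+1)
      + C (α (2*m+4) * α (2*m+3) + γ (2*m+3) * (p + β (2*m+4) + β (2*m+2))) * A m
      + C (γ (2*m+3) * γ (2*m+1)) * prevP A m
      + C (p + β (2*m+5) + β (2*m+4)) * R (m+2)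
      + C (γ (2*m+4) + γ (2*m+3) + α (2*m+4) * (p + β (2*m+4) + β (2*m+3))) * R (m+1)
      + C (α (2*m+4) * γ (2*m+2) + γ (2*m+3) * α (2*m+2)) * R m = 0 := by
  intro m
  -- Recurrences for `W (2m+3)`, ..., `W (2m+6)`, read on the components.
  obtain ⟨-, e3⟩ := qd_step p q a _ _ _ _ _ _ _ _ _ _ _ _ _ _ _
    (hQDe m) (hQDo m) (hQDe (m+1)) (hQDo (m+1)) (hWrec (2*m))
  obtain ⟨-, e4⟩ := qd_step p q a _ _ _ _ _ _ _ _ _ _ _ _ _ _ _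
    (hQDo m) (hQDe (m+1)) (hQDo (m+1)) (hQDe (m+2)) (hWrec (2*m+1))
  obtain ⟨f5, e5⟩ := qd_step p q a _ _ _ _ _ _ _ _ _ _ _ _ _ _ _
    (hQDe (m+1)) (hQDo (m+1)) (hQDe (m+2)) (hQDo (m+2)) (hWrec (2*m+2))
  obtain ⟨-, e6⟩ := qd_step p q a _ _ _ _ _ _ _ _ _ _ _ _ _ _ _
    (hQDo (m+1)) (hQDe (m+2)) (hQDo (m+2)) (hQDe (m+3)) (hWrec (2*m+3))
  have hprev : ∀ n, prevP A (n+1) = A n := fun _ => rfl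
  simp only [hprev, Nat.add_assoc, Nat.reduceAdd] at e3 e4 f5 e5 e6
  simp only [C_add, C_sub, C_mul, C_pow]
  -- `e6` expresses `A (m+2)`; `f5` eliminates `B (m+2)`, and `e5`, `e4`, `e3` then eliminate
  -- `P (m+2)`, `B (m+1)` and `P (m+1)`.
  linear_combination e6 + f5 - (C a - C (β (2*m+4))) * e5 + C (α (2*m+4)) * e4
    + C (γ (2*m+3)) * e3
end

section
/- Let {W_n}_{n≥0} be a 2-orthogonal monic polynomial sequence over ℂ with recurrence coefficients β_n, α_n, γ_n, let p, q, a ∈ ℂ, ω(x) = x² + px + q, and let {P_n}, {R_n}, {a_n}, {b_n} be its general quadratic decomposition (with the convention a_{−1} = 0). Then for every n ≥ 2: R_{n+1}(x) − (x − ω(a) + (a − β_{2n+1})(a + p + β_{2n+1}) − α_{2n+2} − α_{2n+1})·R_n(x) + (α_{2n+1}α_{2n} + γ_{2n}(p + β_{2n+1} + β_{2n−1}))·R_{n−1}(x) + γ_{2n}γ_{2n−2}·R_{n−2}(x) + (p + β_{2n+2} + β_{2n+1})·a_n(x) + (γ_{2n+1} + γ_{2n} + α_{2n+1}(p + β_{2n+1}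 + β_{2n}))·a_{n−1}(x) + (α_{2n+1}γ_{2n−1} + γ_{2n}α_{2n−1})·a_{n−2}(x) = 0. -/
/-!
Write `ω = X² + pX + q`. The polynomials over `ℂ` form a free module over `ℂ[ω]` with basis
`1, X - a`; `eq_zero_of_comp_add_mul_comp_eq_zero` gives independence by parity of degrees. Since
`(X - a)² = (ω - ω(a)) - (2a + p)(X - a)`, multiplication by `X - b` acts on coordinates by
`(U, V) ↦ ((a - b) U + (X - ω(a)) V, U - (a + p + b) V)`, so one step of the recurrence for `W`
splits into two recurrences for the coordinates (`coord_rec`). Splitting the steps that produce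
`W (2n)`, `W (2n+1)`, `W (2n+2)` and `W (2n+3)` and eliminating `P` and `B` linearly gives the
stated relation between `R` and `A`.
-/

open Polynomial

/-- `1` and `X - a` are linearly independent over the polynomials in `X² + pX + q`: a nonzero
`U(ω)` has even degree, a nonzero `(X - a) V(ω)` odd degree. -/
lemma eq_zero_of_comp_add_mul_comp_eq_zero (p q a : ℂ) (U V : Polynomial ℂ)
    (h : U.comp (X^2 + C p * X + C q) + (X - C a) * V.comp (X^2 + C p * X + C q) = 0) :
    U = 0 ∧ V = 0 := by
  have hω : (X^2 + C p * X + C q : Polynomial ℂ).natDegree = 2 := by compute_degree!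
  have hV : V = 0 := by
    by_contra hV
    have hVc : V.comp (X^2 + C p * X + C q) ≠ 0 := by
      intro h0
      rcases comp_eq_zero_iff.1 h0 with h1 | ⟨_, h1⟩
      · exact hV h1
      · rw [h1, natDegree_C] at hω
        omega
    have h2 : U.comp (X^2 + C p * X + C q) = -((X - C a) * V.comp (X^2 + C p * X + C q)) :=
      eq_neg_of_add_eq_zero_left h
    have h3 := congrArg natDegree h2
    rw [natDegree_neg, natDegree_mul (X_sub_C_ne_zero a) hVc, natDegree_comp, natDegree_comp,
      hω, natDegree_X_sub_C] at h3
    omega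
  refine ⟨?_, hV⟩
  rw [hV, zero_comp, mul_zero, add_zero] at h
  rcases comp_eq_zero_iff.1 h with h1 | ⟨_, h1⟩
  · exact h1
  · rw [h1, natDegree_C] at hω
    omega

/-- The recurrence `W₃ = (X - b) W₂ - c W₁ - d W₀`, read off in coordinates
`Wᵢ = Uᵢ(ω) + (X - a) Vᵢ(ω)`. -/
lemma coord_rec (p q a b c d : ℂ) (W₀ W₁ W₂ W₃ U₀ V₀ U₁ V₁ U₂ V₂ U₃ V₃ : Polynomial ℂ)
    (h₀ : W₀ = U₀.comp (X^2 + C p * X + C q) + (X - C a) * V₀.comp (X^2 + C p * X + C q))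
    (h₁ : W₁ = U₁.comp (X^2 + C p * X + C q) + (X - C a) * V₁.comp (X^2 + C p * X + C q))
    (h₂ : W₂ = U₂.comp (X^2 + C p * X + C q) + (X - C a) * V₂.comp (X^2 + C p * X + C q))
    (h₃ : W₃ = U₃.comp (X^2 + C p * X + C q) + (X - C a) * V₃.comp (X^2 + C p * X + C q))
    (h : W₃ = (X - C b) * W₂ - C c * W₁ - C d * W₀) :
    U₃ = C (a - b) * U₂ + (X - C (a^2 + p*a + q)) * V₂ - C c * U₁ - C d * U₀ ∧
    V₃ = U₂ - C (a + p + b) * V₂ - C c * V₁ - C d * V₀ := by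
  have key := eq_zero_of_comp_add_mul_comp_eq_zero p q a
    (U₃ - (C (a - b) * U₂ + (X - C (a^2 + p*a + q)) * V₂ - C c * U₁ - C d * U₀))
    (V₃ - (U₂ - C (a + p + b) * V₂ - C c * V₁ - C d * V₀)) (by
      rw [h₀, h₁, h₂, h₃] at h
      simp only [sub_comp, add_comp, mul_comp, C_comp, X_comp, C_add, C_sub, C_mul, C_pow, pow_comp]
      linear_combination h)
  exact ⟨sub_eq_zero.1 key.1, sub_eq_zero.1 key.2⟩

theorem stmt_5 (W : ℕ → Polynomial ℂ) (β α γ : ℕ → ℂ)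
    (hγ : ∀ n, 1 ≤ n → γ n ≠ 0)
    (hW0 : W 0 = 1) (hW1 : W 1 = X - C (β 0))
    (hW2 : W 2 = (X - C (β 1)) * W 1 - C (α 1))
    (hWrec : ∀ n, W (n+3) = (X - C (β (n+2))) * W (n+2)
        - C (α (n+2)) * W (n+1) - C (γ (n+1)) * W n)
    (p q a : ℂ) (P R A B : ℕ → Polynomial ℂ)
    (hP : ∀ n, (P n).Monic ∧ (P n).natDegree = n)
    (hR : ∀ n, (R n).Monic ∧ (R n).natDegree = n)
    (hA : ∀ n, (A n).natDegree ≤ n)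
    (hB : ∀ n, (B n).natDegree ≤ n)
    (hQDe : ∀ n, W (2*n) = (P n).comp (X^2 + C p * X + C q)
        + (X - C a) * (prevP A n).comp (X^2 + C p * X + C q))
    (hQDo : ∀ n, W (2*n+1) = (B n).comp (X^2 + C p * X + C q)
        + (X - C a) * (R n).comp (X^2 + C p * X + C q)) :
    ∀ m : ℕ,
      R (m+3)
      - (X - C (a^2 + p*a + q)
          + C ((a - β (2*m+5)) * (a + p + β (2*m+5)) - α (2*m+6) - α (2*m+5))) * R (m+2)
      + C (α (2*m+5) * α (2*m+4) + γ (2*m+4) * (p + β (2*m+5) + β (2*m+3))) * R (m+1)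
      + C (γ (2*m+4) * γ (2*m+2)) * R m
      + C (p + β (2*m+6) + β (2*m+5)) * A (m+2)
      + C (γ (2*m+5) + γ (2*m+4) + α (2*m+5) * (p + β (2*m+5) + β (2*m+4))) * A (m+1)
      + C (α (2*m+5) * γ (2*m+3) + γ (2*m+4) * α (2*m+3)) * A m = 0 := by
  intro m
  have evenStep : ∀ n,
      P (n+2) = C (a - β (2*n+3)) * B (n+1) + (X - C (a^2 + p*a + q)) * R (n+1)
        - C (α (2*n+3)) * P (n+1) - C (γ (2*n+2)) * B n ∧
      A (n+1) = B (n+1) - C (a + p + β (2*n+3)) * R (n+1)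
        - C (α (2*n+3)) * A n - C (γ (2*n+2)) * R n := fun n =>
    coord_rec p q a _ _ _ _ _ _ _ _ _ _ _ _ _ _ _
      (hQDo n) (hQDe (n+1)) (hQDo (n+1)) (hQDe (n+2)) (hWrec (2*n+1))
  have oddStep : ∀ n,
      R (n+2) = P (n+2) - C (a + p + β (2*n+4)) * A (n+1)
        - C (α (2*n+4)) * R (n+1) - C (γ (2*n+3)) * A n := fun n =>
    (coord_rec p q a _ _ _ _ _ _ _ _ _ _ _ _ _ _ _
      (hQDe (n+1)) (hQDo (n+1)) (hQDe (n+2)) (hQDo (n+2)) (hWrec (2*n+2))).2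
  obtain ⟨hP₁, hA₁⟩ := evenStep (m+1)
  have hA₀ := (evenStep m).2
  have hR₁ := oddStep (m+1)
  have hR₀ := oddStep m
  simp only [show 2*(m+1)+3 = 2*m+5 by ring, show 2*(m+1)+2 = 2*m+4 by ring,
    show 2*(m+1)+4 = 2*m+6 by ring, show m+1+2 = m+3 by ring, show m+1+1 = m+2 by ring]
    at hP₁ hA₁ hR₁
  simp only [C_add, C_sub, C_mul, C_pow] at *
  -- `hA₁`, `hR₀` and `hA₀` eliminate `B (m+2)`, `P (m+2)` and `B (m+1)` from `hP₁`.
  linear_combination hR₁ + hP₁ - (C a - C (β (2*m+5))) * hA₁ + C (α (2*m+5)) * hR₀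
    + C (γ (2*m+4)) * hA₀
end

section
/- Let {W_n}_{n≥0} be a 2-orthogonal monic polynomial sequence over ℂ with recurrence coefficients β_n, α_n, γ_n, let p, q, a ∈ ℂ, ω(x) = x² + px + q, and let {P_n}, {R_n}, {a_n}, {b_n} be its general quadratic decomposition (with the conventions a_{−1} = 0 and b_{−1} = 0). Then for every n ≥ 1: P_{n+2}(x) − (x − ω(a) + (a − β_{2n+2})(a + p + β_{2n+2}) − α_{2n+3} − α_{2n+2})·P_{n+1}(x) + (α_{2n+2}α_{2n+1} + γ_{2n+1}(p + β_{2n+2} + β_{2n}))·P_n(x) + γ_{2n+1}γ_{2n−1}·P_{n−1}(x) + (p + β_{2n+3} + β_{2n+2})·b_{n+1}(x) + (γ_{2n+2} + γ_{2n+1} + α_{2n+2}(p + β_{2n+2} + β_{2n+1}))·b_n(x) + (α_{2n+2}γ_{2n} + γ_{2n+1}α_{2n})·b_{n−1}(x) = 0. -/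
/-!
Four consecutive instances of the recurrence combine into a single linear relation between
`W (2m+6), …, W (2m)` whose coefficients are polynomials in `ω = X² + pX + q`: the factor
`X - β_{2m+4}` is completed to `(X + p + β_{2m+4})(X - β_{2m+4})`, which differs from `ω` by a constant.
Inserting the quadratic decomposition gives `U(ω) + (X - a) V(ω) = 0`, where `U` is the left-hand side
of the claim. The two summands have degrees of different parity (`eq_zero_of_comp_add_comp`), so `U = 0`.
-/

open Polynomial

/-- Uniqueness of the quadratic decomposition: `1` and `X - a` are independent over `ℂ[ω]`. -/
lemma eq_zero_of_comp_add_comp (p q a : ℂ) (U V : Polynomial ℂ)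
    (h : U.comp (X^2 + C p * X + C q) + (X - C a) * V.comp (X^2 + C p * X + C q) = 0) :
    U = 0 := by
  have hw : (X^2 + C p * X + C q : Polynomial ℂ).natDegree = 2 := by compute_degree!
  have hinj : ∀ T : Polynomial ℂ, T.comp (X^2 + C p * X + C q) = 0 → T = 0 := by
    intro T hT
    rcases Polynomial.comp_eq_zero_iff.1 hT with h | ⟨_, h⟩
    · exact h
    · rw [h] at hw
      simp at hw
  by_cases hV : V = 0
  · subst hV
    exact hinj U (by simpa using h)
  · exfalso
    have h1 : U.comp (X^2 + C p * X + C q) = -((X - C a) * V.comp (X^2 + C p * X + C q)) :=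
      eq_neg_of_add_eq_zero_left h
    have h2 := congrArg natDegree h1
    rw [natDegree_neg, natDegree_mul (X_sub_C_ne_zero a) (fun h0 => hV (hinj V h0)),
      natDegree_comp, natDegree_comp, hw, natDegree_X_sub_C] at h2
    omega

theorem stmt_7 (W : ℕ → Polynomial ℂ) (β α γ : ℕ → ℂ)
    (hγ : ∀ n, 1 ≤ n → γ n ≠ 0)
    (hW0 : W 0 = 1) (hW1 : W 1 = X - C (β 0))
    (hW2 : W 2 = (X - C (β 1)) * W 1 - C (α 1))
    (hWrec : ∀ n, W (n+3) = (X - C (β (n+2))) * W (n+2)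
        - C (α (n+2)) * W (n+1) - C (γ (n+1)) * W n)
    (p q a : ℂ) (P R A B : ℕ → Polynomial ℂ)
    (hP : ∀ n, (P n).Monic ∧ (P n).natDegree = n)
    (hR : ∀ n, (R n).Monic ∧ (R n).natDegree = n)
    (hA : ∀ n, (A n).natDegree ≤ n)
    (hB : ∀ n, (B n).natDegree ≤ n)
    (hQDe : ∀ n, W (2*n) = (P n).comp (X^2 + C p * X + C q)
        + (X - C a) * (prevP A n).comp (X^2 + C p * X + C q))
    (hQDo : ∀ n, W (2*n+1) = (B n).comp (X^2 + C p * X + C q)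
        + (X - C a) * (R n).comp (X^2 + C p * X + C q)) :
    ∀ m : ℕ,
      P (m+3)
      - (X - C (a^2 + p*a + q)
          + C ((a - β (2*m+4)) * (a + p + β (2*m+4)) - α (2*m+5) - α (2*m+4))) * P (m+2)
      + C (α (2*m+4) * α (2*m+3) + γ (2*m+3) * (p + β (2*m+4) + β (2*m+2))) * P (m+1)
      + C (γ (2*m+3) * γ (2*m+1)) * P m
      + C (p + β (2*m+5) + β (2*m+4)) * B (m+2)
      + C (γ (2*m+4) + γ (2*m+3) + α (2*m+4) * (p + β (2*m+4) + β (2*m+3))) * B (m+1)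
      + C (α (2*m+4) * γ (2*m+2) + γ (2*m+3) * α (2*m+2)) * B m = 0 := by
  intro m
  have r0 := hWrec (2*m)
  have r1 := hWrec (2*m+1)
  have r2 := hWrec (2*m+2)
  have r3 := hWrec (2*m+3)
  have e0 := hQDe m
  have e1 : W (2*m+2) = _ := hQDe (m+1)
  have e2 : W (2*m+4) = _ := hQDe (m+2)
  have e3 : W (2*m+6) = _ := hQDe (m+3)
  have o0 := hQDo m
  have o1 : W (2*m+3) = _ := hQDo (m+1)
  have o2 : W (2*m+5) = _ := hQDo (m+2)
  simp only [add_assoc, Nat.reduceAdd] at r1 r2 r3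
  -- The `(X - a)`-component obeys the same relation, with `A`, `R` in place of `P`, `B`.
  apply eq_zero_of_comp_add_comp p q a _
    (prevP A (m+3)
      - (X - C (a^2 + p*a + q)
          + C ((a - β (2*m+4)) * (a + p + β (2*m+4)) - α (2*m+5) - α (2*m+4))) * prevP A (m+2)
      + C (α (2*m+4) * α (2*m+3) + γ (2*m+3) * (p + β (2*m+4) + β (2*m+2))) * prevP A (m+1)
      + C (γ (2*m+3) * γ (2*m+1)) * prevP A m
      + C (p + β (2*m+5) + β (2*m+4)) * R (m+2)
      + C (γ (2*m+4) + γ (2*m+3) + α (2*m+4) * (p + β (2*m+4) + β (2*m+3))) * R (m+1)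
      + C (α (2*m+4) * γ (2*m+2) + γ (2*m+3) * α (2*m+2)) * R m)
  -- The same relation for `W` itself, with `X` replaced by `ω`.
  have key : W (2*m+6)
      - ((X^2 + C p * X + C q) - C (a^2 + p*a + q)
          + C ((a - β (2*m+4)) * (a + p + β (2*m+4)) - α (2*m+5) - α (2*m+4))) * W (2*m+4)
      + C (α (2*m+4) * α (2*m+3) + γ (2*m+3) * (p + β (2*m+4) + β (2*m+2))) * W (2*m+2)
      + C (γ (2*m+3) * γ (2*m+1)) * W (2*m)
      + C (p + β (2*m+5) + β (2*m+4)) * W (2*m+5)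
      + C (γ (2*m+4) + γ (2*m+3) + α (2*m+4) * (p + β (2*m+4) + β (2*m+3))) * W (2*m+3)
      + C (α (2*m+4) * γ (2*m+2) + γ (2*m+3) * α (2*m+2)) * W (2*m+1) = 0 := by
    simp only [C_add, C_sub, C_mul, C_pow]
    linear_combination r3 + (X + C p + C (β (2*m+4))) * r2 + C (α (2*m+4)) * r1
      + C (γ (2*m+3)) * r0
  rw [e0, e1, e2, e3, o0, o1, o2] at key
  simp only [add_comp, sub_comp, mul_comp, C_comp, X_comp]
  linear_combination key
end

section
/- Let β, α₁, α₂, p, q, a ∈ ℂ and γ ∈ ℂ∖{0}, let {W_n} be the 2-orthogonal MPS with recurrence coefficients β_{2n} = −(p+β), β_{2n+1} = β (n ≥ 0), α_{2n+1} = α₁, α_{2n+2} = α₂ (n ≥ 0), γ_n = (−1)ⁿγ (n ≥ 1), and let {P_n}, {R_n}, {a_n}, {b_n} be its general quadratic decomposition with respect to ω(x) = x² + px + q and a. Then, with the conventions a_{−1} = a_{−2} = 0, for every n ≥ 1: a_{n+1}(x) = (x − ω(a) + (a − β)(a + p + β) − α₂ − α₁)·a_n(x) − (α₁α₂ + γ(p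 + 2β))·a_{n−1}(x) − γ²·a_{n−2}(x). -/
/-!
The idea is to eliminate the odd-indexed polynomials. Write `E n = W (2n)`, `O n = W (2n+1)`. The
recurrence reads `E (n+1) = (x - β) O n - α₁ E n - γ O (n-1)` and
`O n = (x + p + β) E n - α₂ O (n-1) + γ E (n-1)`. Forming `E (n+1) + α₂ E n` and substituting the
second relation yields a recurrence in the `E n` alone. The alternating sign of `γ` makes the `x`
cancel in the coefficient of `E (n-1)`, and `(x - β)(x + p + β) = ω - q - β (p + β)`, so all the
coefficients are polynomials in `ω`. Since `f(ω) + (x - a) g(ω)` determines `g`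
(`eq_zero_of_quadratic_decomp`), the components `a_n` satisfy the same recurrence.
-/


open Polynomial

/-- Uniqueness of the `(x - a)`-component: a nonzero `g` would make `(x - a) g(ω)` of odd degree,
whereas `f(ω)` has even degree. -/
lemma eq_zero_of_quadratic_decomp (p q a : ℂ) (f g : Polynomial ℂ)
    (h : f.comp (X^2 + C p * X + C q) + (X - C a) * g.comp (X^2 + C p * X + C q) = 0) :
    g = 0 := by
  by_contra hg
  have hω : (X^2 + C p * X + C q : Polynomial ℂ).natDegree = 2 := by compute_degree!
  have hgc : g.comp (X^2 + C p * X + C q) ≠ 0 := by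
    intro h0
    rcases comp_eq_zero_iff.mp h0 with h1 | ⟨-, h1⟩
    · exact hg h1
    · rw [h1, natDegree_C] at hω
      omega
  have h2 := congrArg natDegree (eq_neg_of_add_eq_zero_left h)
  rw [natDegree_neg, natDegree_mul (X_sub_C_ne_zero a) hgc, natDegree_comp, natDegree_comp, hω,
    natDegree_X_sub_C] at h2
  omega

theorem stmt_8 (β α₁ α₂ p q a γ : ℂ) (hγ : γ ≠ 0)
    (W : ℕ → Polynomial ℂ)
    (hW0 : W 0 = 1) (hW1 : W 1 = X - C (-(p + β)))
    (hW2 : W 2 = (X - C β) * W 1 - C α₁)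
    (hWrec : ∀ n : ℕ, W (n+3) = (X - C (if n % 2 = 0 then -(p + β) else β)) * W (n+2)
        - C (if n % 2 = 0 then α₂ else α₁) * W (n+1) - C ((-1 : ℂ)^(n+1) * γ) * W n)
    (P R A B : ℕ → Polynomial ℂ)
    (hP : ∀ n, (P n).Monic ∧ (P n).natDegree = n)
    (hR : ∀ n, (R n).Monic ∧ (R n).natDegree = n)
    (hA : ∀ n, (A n).natDegree ≤ n)
    (hB : ∀ n, (B n).natDegree ≤ n)
    (hQDe : ∀ n, W (2*n) = (P n).comp (X^2 + C p * X + C q)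
        + (X - C a) * (prevP A n).comp (X^2 + C p * X + C q))
    (hQDo : ∀ n, W (2*n+1) = (B n).comp (X^2 + C p * X + C q)
        + (X - C a) * (R n).comp (X^2 + C p * X + C q)) :
    ∀ m : ℕ,
      A (m+2) = (X - C (a^2 + p*a + q) + C ((a - β) * (a + p + β) - α₂ - α₁)) * A (m+1)
        - C (α₁ * α₂ + γ * (p + 2*β)) * A m - C (γ^2) * prevP A m := by
  intro m
  have hodd (k : ℕ) : W (2*k+3) = (X + C p + C β) * W (2*k+2) - C α₂ * W (2*k+1)
      + C γ * W (2*k) := by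
    have h := hWrec (2*k)
    have h1 : (2*k) % 2 = 0 := by omega
    have h2 : (-1 : ℂ)^(2*k+1) = -1 := by rw [pow_succ, pow_mul]; simp
    rw [if_pos h1, if_pos h1, h2] at h
    rw [h]
    simp only [map_neg, map_add, neg_mul, one_mul]
    ring
  have heven (k : ℕ) : W (2*k+4) = (X - C β) * W (2*k+3) - C α₁ * W (2*k+2)
      - C γ * W (2*k+1) := by
    have h := hWrec (2*k+1)
    have h1 : ¬ (2*k+1) % 2 = 0 := by omega
    have h2 : (-1 : ℂ)^(2*k+1+1) = 1 := by rw [show 2*k+1+1 = 2*(k+1) by ring, pow_mul]; simp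
    rw [if_neg h1, if_neg h1, h2, one_mul] at h
    exact h
  -- The recurrence satisfied by the even-indexed polynomials alone.
  have key : W (2*(m+3)) = (X^2 + C p * X + C q - C q - C β * (C p + C β) - C α₂ - C α₁)
        * W (2*(m+2))
      - (C α₁ * C α₂ + C γ * (C p + 2 * C β)) * W (2*(m+1)) - C γ ^ 2 * W (2*m) := by
    have e1 := heven (m+1)
    have e2 := heven m
    have o1 := hodd (m+1)
    have o2 := hodd m
    simp only [mul_add, Nat.reduceMul, add_assoc, Nat.reduceAdd] at e1 e2 o1 o2 ⊢
    linear_combination e1 + C α₂ * e2 + (X - C β) * o1 - C γ * o2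
  rw [hQDe, hQDe, hQDe, hQDe] at key
  have hs (k : ℕ) : prevP A (k+1) = A k := rfl
  rw [hs, hs, hs] at key
  rw [← sub_eq_zero]
  -- The polynomial `f` repeats the same combination on the `P`-components.
  apply eq_zero_of_quadratic_decomp p q a
    (P (m+3) - ((X - C (a^2 + p*a + q) + C ((a - β) * (a + p + β) - α₂ - α₁)) * P (m+2)
        - C (α₁ * α₂ + γ * (p + 2*β)) * P (m+1) - C (γ^2) * P m))
  simp only [sub_comp, mul_comp, add_comp, X_comp, C_comp]
  simp only [map_add, map_sub, map_mul, map_pow, map_ofNat]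
  linear_combination key
end

section
/- Let β, α₁, α₂, p, q, a ∈ ℂ and γ ∈ ℂ∖{0}, let {W_n} be the 2-orthogonal MPS with recurrence coefficients β_{2n} = −(p+β), β_{2n+1} = β (n ≥ 0), α_{2n+1} = α₁, α_{2n+2} = α₂ (n ≥ 0), γ_n = (−1)ⁿγ (n ≥ 1), and let {P_n}, {R_n}, {a_n}, {b_n} be its general quadratic decomposition with respect to ω(x) = x² + px + q and a. Then, with the convention b_{−1} = 0, for every n ≥ 1: b_{n+1}(x) = (x − ω(a) + (a − β)(a + p + β) − α₂ − α₁)·b_n(x) − (α₁α₂ + γ(p + 2β))·b_{n−1}(x) − γ²·b_{n−2}(x). -/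
/-!
The odd-indexed polynomials `W (2n+1)` satisfy a recurrence on their own. Writing `u = x + p + β` and
`v = x - β`, the recurrence of `W` reads `O (n+1) + α₂ O n = u E (n+1) + γ E n` and
`E (n+2) + α₁ E (n+1) = v O (n+1) - γ O n` for the odd part `O` and the even part `E`. Combining the
first relation at `n+1` with `α₁` times the same relation at `n` eliminates `E` and leaves

`O (n+2) = (u v - α₁ - α₂) O (n+1) - (α₁ α₂ + γ (u - v)) O n - γ² O (n-1)`.

Here `u - v = p + 2β` is constant and `u v = ω(x) - q - β (p + β)`, so every coefficient is a
polynomial in `ω`. The decomposition `f = F(ω) + (x - a) G(ω)` is unique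
(`eq_zero_of_comp_add_mul_comp`), hence the component `B` satisfies the same recurrence.
-/

open Polynomial

/-- Uniqueness of the quadratic decomposition: the two summands have degrees of opposite parity, so
they can cancel only if both vanish. -/
lemma eq_zero_of_comp_add_mul_comp (p q a : ℂ) (F G : Polynomial ℂ)
    (h : F.comp (X^2 + C p * X + C q) + (X - C a) * G.comp (X^2 + C p * X + C q) = 0) :
    F = 0 := by
  have hω : (X^2 + C p * X + C q : Polynomial ℂ).natDegree = 2 := by compute_degree!
  by_cases hG : G = 0
  · have h0 : F.comp (X^2 + C p * X + C q) = 0 := by simpa [hG] using h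
    rcases comp_eq_zero_iff.1 h0 with h1 | ⟨-, h1⟩
    · exact h1
    · rw [h1, natDegree_C] at hω
      omega
  · exfalso
    have hGc : G.comp (X^2 + C p * X + C q) ≠ 0 := by
      intro h0
      rcases comp_eq_zero_iff.1 h0 with h1 | ⟨-, h1⟩
      · exact hG h1
      · rw [h1, natDegree_C] at hω
        omega
    have hdeg := congrArg natDegree (eq_neg_of_add_eq_zero_left h)
    rw [natDegree_neg, natDegree_mul (X_sub_C_ne_zero a) hGc, natDegree_comp, natDegree_comp,
      natDegree_X_sub_C, hω] at hdeg
    omega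

theorem stmt_10 (β α₁ α₂ p q a γ : ℂ) (hγ : γ ≠ 0)
    (W : ℕ → Polynomial ℂ)
    (hW0 : W 0 = 1) (hW1 : W 1 = X - C (-(p + β)))
    (hW2 : W 2 = (X - C β) * W 1 - C α₁)
    (hWrec : ∀ n : ℕ, W (n+3) = (X - C (if n % 2 = 0 then -(p + β) else β)) * W (n+2)
        - C (if n % 2 = 0 then α₂ else α₁) * W (n+1) - C ((-1 : ℂ)^(n+1) * γ) * W n)
    (P R A B : ℕ → Polynomial ℂ)
    (hP : ∀ n, (P n).Monic ∧ (P n).natDegree = n)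
    (hR : ∀ n, (R n).Monic ∧ (R n).natDegree = n)
    (hA : ∀ n, (A n).natDegree ≤ n)
    (hB : ∀ n, (B n).natDegree ≤ n)
    (hQDe : ∀ n, W (2*n) = (P n).comp (X^2 + C p * X + C q)
        + (X - C a) * (prevP A n).comp (X^2 + C p * X + C q))
    (hQDo : ∀ n, W (2*n+1) = (B n).comp (X^2 + C p * X + C q)
        + (X - C a) * (R n).comp (X^2 + C p * X + C q)) :
    ∀ m : ℕ,
      B (m+2) = (X - C (a^2 + p*a + q) + C ((a - β) * (a + p + β) - α₂ - α₁)) * B (m+1)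
        - C (α₁ * α₂ + γ * (p + 2*β)) * B m - C (γ^2) * prevP B m := by
  intro m
  -- The two halves of the recurrence of `W`, according to the parity of the index.
  have hodd : ∀ k, W (2*k+3) = (X + C p + C β) * W (2*k+2) - C α₂ * W (2*k+1)
      + C γ * W (2*k) := by
    intro k
    have h := hWrec (2*k)
    simp only [Nat.mul_mod_right, if_true, pow_succ, pow_mul] at h
    rw [h]
    simp only [map_neg, map_add, map_mul, map_one, map_pow]
    ring
  have heven : ∀ k, W (2*k+4) = (X - C β) * W (2*k+3) - C α₁ * W (2*k+2)
      - C γ * W (2*k+1) := by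
    intro k
    have h := hWrec (2*k+1)
    have h1 : (2*k+1) % 2 ≠ 0 := by omega
    simp only [if_neg h1, pow_succ, pow_mul] at h
    rw [h]
    simp only [map_neg, map_mul, map_one, map_pow]
    ring
  -- The recurrence for the odd-indexed polynomials, with `W (-1)` read as `0`.
  have hrec : W (2*(m+2)+1) = ((X + C p + C β) * (X - C β) - C α₁ - C α₂) * W (2*(m+1)+1)
      - (C α₁ * C α₂ + C γ * (C p + 2 * C β)) * W (2*m+1)
      - C γ ^ 2 * prevP (fun k => W (2*k+1)) m := by
    cases m with
    | zero =>
      have e1 := hodd 0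
      have e2 := hodd 1
      have e3 := heven 0
      simp only [prevP, Nat.mul_zero, Nat.mul_one, Nat.zero_add, Nat.reduceAdd, Nat.reduceMul]
        at e1 e2 e3 ⊢
      have e4 : W 2 = (X - C β) * W 1 - C α₁ * W 0 := by
        rw [hW2, hW0, mul_one]
      linear_combination e2 + C α₁ * e1 + (X + C p + C β) * e3 + C γ * e4
    | succ k =>
      have e1 := hodd (k+1)
      have e2 := hodd (k+2)
      have e3 := heven (k+1)
      have e4 := heven k
      simp only [prevP, mul_add, Nat.reduceMul, add_assoc, Nat.reduceAdd] at e1 e2 e3 e4 ⊢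
      linear_combination e2 + C α₁ * e1 + (X + C p + C β) * e3 + C γ * e4
  set c : Polynomial ℂ := X - C (a^2 + p*a + q) + C ((a - β) * (a + p + β) - α₂ - α₁) with hc
  set d : ℂ := α₁ * α₂ + γ * (p + 2*β) with hd
  have hprev : prevP (fun k => W (2*k+1)) m = (prevP B m).comp (X^2 + C p * X + C q)
      + (X - C a) * (prevP R m).comp (X^2 + C p * X + C q) := by
    cases m with
    | zero => simp [prevP]
    | succ k => exact hQDo k
  have hcω : c.comp (X^2 + C p * X + C q)
      = (X + C p + C β) * (X - C β) - C α₁ - C α₂ := by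
    simp only [hc, add_comp, sub_comp, mul_comp, pow_comp, X_comp, C_comp, map_add,
      map_sub, map_mul, map_pow]
    ring
  have hdC : C d = C α₁ * C α₂ + C γ * (C p + 2 * C β) := by
    simp only [hd, map_add, map_mul, map_ofNat]
  rw [hprev, hQDo, hQDo, hQDo, ← hcω, ← hdC] at hrec
  refine sub_eq_zero.1 (eq_zero_of_comp_add_mul_comp p q a _
    (R (m+2) - (c * R (m+1) - C d * R m - C (γ^2) * prevP R m)) ?_)
  simp only [sub_comp, mul_comp, C_comp, map_pow, pow_comp]
  linear_combination hrec
end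

section
/- Let β, α₁, α₂, p, q, a ∈ ℂ and γ ∈ ℂ∖{0}, let {W_n} be the 2-orthogonal MPS with recurrence coefficients β_{2n} = −(p+β), β_{2n+1} = β (n ≥ 0), α_{2n+1} = α₁, α_{2n+2} = α₂ (n ≥ 0), γ_n = (−1)ⁿγ (n ≥ 1), and let {P_n}, {R_n}, {a_n}, {b_n} be its general quadratic decomposition with respect to ω(x) = x² + px + q and a. Then a_n = 0 for all n ≥ 0, and consequently W_{2n}(x) = P_n(x² + px + q) for all n ≥ 0. -/
/-!
The even-indexed polynomials `W (2m)` are polynomials in `ω = X² + pX + q`.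
Write `u = X - β` and `v = X + p + β`; then `u * v = ω - q - β (p + β)` is a polynomial in `ω`,
and `u - v` is a constant. Eliminating the odd-indexed terms from the recurrence gives
`W (2m+6) = (uv - α₁ - α₂) W (2m+4) + (γ (u - v) - α₁ α₂) W (2m+2) - γ² W (2m)`,
so membership in the image of composition with `ω` propagates by induction from the first three
even-indexed terms.

On the other hand, `F(ω) + (X - a) G(ω)` determines `F` and `G`: a nonzero `F(ω)` has even degree
and a nonzero `(X - a) G(ω)` has odd degree (`eq_zero_of_comp_eq`). Comparing with the quadratic
decomposition forces `A n = 0`.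
-/

open Polynomial

/-- The parity argument: `F(ω)` has even degree, while `(X - a) G(ω)` has odd degree if `G ≠ 0`. -/
theorem eq_zero_of_comp_eq (p q a : ℂ) (F G : Polynomial ℂ)
    (h : F.comp (X^2 + C p * X + C q) = (X - C a) * G.comp (X^2 + C p * X + C q)) : G = 0 := by
  by_contra hG
  have hω : (X^2 + C p * X + C q : Polynomial ℂ).natDegree = 2 := by compute_degree!
  have hGc : G.comp (X^2 + C p * X + C q) ≠ 0 := by
    intro h0
    rcases comp_eq_zero_iff.mp h0 with h1 | ⟨_, h1⟩
    · exact hG h1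
    · rw [h1, natDegree_C] at hω
      omega
  have h2 := congrArg natDegree h
  rw [natDegree_mul (X_sub_C_ne_zero a) hGc, natDegree_comp, natDegree_comp, hω,
    natDegree_X_sub_C] at h2
  omega

theorem stmt_12 (β α₁ α₂ p q a γ : ℂ) (hγ : γ ≠ 0)
    (W : ℕ → Polynomial ℂ)
    (hW0 : W 0 = 1) (hW1 : W 1 = X - C (-(p + β)))
    (hW2 : W 2 = (X - C β) * W 1 - C α₁)
    (hWrec : ∀ n : ℕ, W (n+3) = (X - C (if n % 2 = 0 then -(p + β) else β)) * W (n+2)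
        - C (if n % 2 = 0 then α₂ else α₁) * W (n+1) - C ((-1 : ℂ)^(n+1) * γ) * W n)
    (P R A B : ℕ → Polynomial ℂ)
    (hP : ∀ n, (P n).Monic ∧ (P n).natDegree = n)
    (hR : ∀ n, (R n).Monic ∧ (R n).natDegree = n)
    (hA : ∀ n, (A n).natDegree ≤ n)
    (hB : ∀ n, (B n).natDegree ≤ n)
    (hQDe : ∀ n, W (2*n) = (P n).comp (X^2 + C p * X + C q)
        + (X - C a) * (prevP A n).comp (X^2 + C p * X + C q))
    (hQDo : ∀ n, W (2*n+1) = (B n).comp (X^2 + C p * X + C q)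
        + (X - C a) * (R n).comp (X^2 + C p * X + C q)) :
    (∀ n, A n = 0) ∧
    (∀ n, W (2*n) = (P n).comp (X^2 + C p * X + C q)) := by
  -- The recurrence, split by the parity of the index.
  have hodd : ∀ m, W (2*m+3) = (X + C p + C β) * W (2*m+2) - C α₂ * W (2*m+1)
      + C γ * W (2*m) := by
    intro m
    have h := hWrec (2*m)
    have e : (-1 : ℂ)^(2*m+1) = -1 := by rw [pow_succ, pow_mul]; simp
    rw [if_pos (by omega), if_pos (by omega), e] at h
    rw [h]
    simp only [C_neg, C_add, C_mul, C_1]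
    ring
  have heven : ∀ m, W (2*m+4) = (X - C β) * W (2*m+3) - C α₁ * W (2*m+2)
      - C γ * W (2*m+1) := by
    intro m
    have h := hWrec (2*m+1)
    have e : (-1 : ℂ)^(2*m+1+1) = 1 := by rw [pow_succ, pow_succ, pow_mul]; simp
    rw [if_neg (by omega), if_neg (by omega), e, one_mul] at h
    exact h
  have hthree : ∀ m, W (2*m+6) = ((X - C β) * (X + C p + C β) - C α₁ - C α₂) * W (2*m+4)
      + (-C γ * (C p + 2 * C β) - C α₁ * C α₂) * W (2*m+2) - C γ ^ 2 * W (2*m) := by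
    intro m
    have h6 : W (2*m+6) = (X - C β) * W (2*m+5) - C α₁ * W (2*m+4)
      - C γ * W (2*m+3) := heven (m+1)
    have h5 : W (2*m+5) = (X + C p + C β) * W (2*m+4) - C α₂ * W (2*m+3)
      + C γ * W (2*m+2) := hodd (m+1)
    linear_combination h6 + (X - C β) * h5 - C γ * hodd m + C α₂ * heven m
  have huv : ((X - C β) * (X + C p + C β) : Polynomial ℂ)
      = (X^2 + C p * X + C q) - C q - C β * (C p + C β) := by ring
  have hE2 : W 2 = (X - C β) * (X + C p + C β) - C α₁ := by
    rw [hW2, hW1]; simp only [C_neg, C_add]; ring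
  have hE4 : W 4 = ((X - C β) * (X + C p + C β) - C α₁ - C α₂) * W 2
      + (-C γ * (C p + 2 * C β) - C α₁ * C α₂) := by
    have h4 := heven 0
    have h3 := hodd 0
    norm_num at h4 h3
    rw [hW0] at h3
    have h1 : W 1 = X + C p + C β := by rw [hW1]; simp only [C_neg, C_add]; ring
    rw [h1] at h3 h4
    linear_combination h4 + (X - C β) * h3 + C α₂ * hE2
  have key : ∀ m, (∃ Q : Polynomial ℂ, W (2*m) = Q.comp (X^2 + C p * X + C q))
      ∧ (∃ Q : Polynomial ℂ, W (2*m+2) = Q.comp (X^2 + C p * X + C q))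
      ∧ (∃ Q : Polynomial ℂ, W (2*m+4) = Q.comp (X^2 + C p * X + C q)) := by
    intro m
    induction m with
    | zero =>
      refine ⟨⟨1, by simp [hW0]⟩,
        ⟨X - C q - C β * (C p + C β) - C α₁, ?_⟩,
        ⟨(X - C q - C β * (C p + C β) - C α₁ - C α₂) * (X - C q - C β * (C p + C β) - C α₁)
          + (-C γ * (C p + C 2 * C β) - C α₁ * C α₂), ?_⟩⟩
      · change W 2 = _
        rw [hE2, huv]
        simp only [sub_comp, mul_comp, add_comp, X_comp, C_comp]
      · change W 4 = _
        rw [hE4, hE2, huv]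
        simp only [sub_comp, mul_comp, add_comp, neg_comp, X_comp, C_comp]
        rfl
    | succ m ih =>
      obtain ⟨⟨Q0, h0⟩, ⟨Q1, h1⟩, ⟨Q2, h2⟩⟩ := ih
      refine ⟨⟨Q1, h1⟩, ⟨Q2, h2⟩,
        ⟨(X - C q - C β * (C p + C β) - C α₁ - C α₂) * Q2
          + (-C γ * (C p + C 2 * C β) - C α₁ * C α₂) * Q1 - C γ ^ 2 * Q0, ?_⟩⟩
      change W (2*m+6) = _
      rw [hthree, h0, h1, h2, huv]
      simp only [sub_comp, mul_comp, add_comp, neg_comp, pow_comp, X_comp, C_comp]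
      rfl
  have hA0 : ∀ n, A n = 0 := by
    intro n
    obtain ⟨Q, hQ⟩ := (key n).2.1
    have h : W (2*n+2) = (P (n+1)).comp (X^2 + C p * X + C q)
        + (X - C a) * (A n).comp (X^2 + C p * X + C q) := hQDe (n+1)
    apply eq_zero_of_comp_eq p q a (Q - P (n+1))
    rw [sub_comp]
    linear_combination h - hQ
  refine ⟨hA0, fun n => ?_⟩
  rw [hQDe n]
  cases n with
  | zero => simp [prevP]
  | succ n => simp [prevP, hA0 n]
end

section
/- Let β, α₁, α₂, p, q, a ∈ ℂ and γ ∈ ℂ∖{0}, let {W_n} be the 2-orthogonal MPS with recurrence coefficients β_{2n} = −(p+β), β_{2n+1} = β (n ≥ 0), α_{2n+1} = α₁, α_{2n+2} = α₂ (n ≥ 0), γ_n = (−1)ⁿγ (n ≥ 1), and let {P_n}, {R_n}, {a_n}, {b_n} be its general quadratic decomposition with respect to ω(x) = x² + px + q and a. Then {R_n} is a 2-orthogonal MPS with constant recurrence coefficients; explicitly: R_0 = 1, R_1(x) = x − (q + α₁ + α₂ + (p+β)β), R_2(x) = (x − (q + α₁ + α₂ + (p+β)β))·R_1(x) − (α₁α₂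 + γ(p + 2β)), and R_{n+1}(x) = (x − (q + α₁ + α₂ + (p+β)β))·R_n(x) − (α₁α₂ + γ(p + 2β))·R_{n−1}(x) − γ²·R_{n−2}(x) for n ≥ 2, where γ² ≠ 0. -/
/-!
The proof rests on a recurrence for the odd-indexed subsequence of `W` alone. Put `E k = W (2k)`,
`O k = W (2k+1)` and let `S` be the shift `k ↦ k + 1`. The two parities of the recurrence of `W` read
`(S + α₂) O = ((x + p + β) S + γ) E` and `(S² + α₁ S) E = ((x - β) S - γ) O`.
Eliminating `E` gives
`(S + α₂)(S² + α₁ S) O = ((x + p + β) S + γ)((x - β) S - γ) O`,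
in which `x` occurs only through `(x + p + β)(x - β) = ω - q - (p + β) β` and
`γ (x - β) - γ (x + p + β) = -γ (p + 2β)`. Hence the recurrence of `O` has coefficients that are
polynomials in `ω`, and since a representation `F(ω) + (x - a) G(ω)` is unique
(`right_eq_zero_of_comp_add_eq_zero`), the component `R` of `O` satisfies the same recurrence.
-/

open Polynomial

/-- Uniqueness of the second component in a quadratic decomposition: `F(ω)` has even degree, while
`(x - a) G(ω)` has odd degree unless `G = 0`. -/
theorem right_eq_zero_of_comp_add_eq_zero (p q a : ℂ) (F G : Polynomial ℂ)
    (h : F.comp (X^2 + C p * X + C q) + (X - C a) * G.comp (X^2 + C p * X + C q) = 0) :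
    G = 0 := by
  by_contra hG
  have hω : (X^2 + C p * X + C q : Polynomial ℂ).natDegree = 2 := by compute_degree!
  have hGω : G.comp (X^2 + C p * X + C q) ≠ 0 := by
    intro h0
    rcases Polynomial.comp_eq_zero_iff.mp h0 with h1 | ⟨_, h1⟩
    · exact hG h1
    · rw [h1, natDegree_C] at hω
      omega
  have hdeg := congrArg natDegree (eq_neg_of_add_eq_zero_left h)
  rw [natDegree_neg, natDegree_mul (X_sub_C_ne_zero a) hGω, natDegree_X_sub_C, natDegree_comp,
    natDegree_comp, hω] at hdeg
  omega

theorem stmt_13 (β α₁ α₂ p q a γ : ℂ) (hγ : γ ≠ 0)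
    (W : ℕ → Polynomial ℂ)
    (hW0 : W 0 = 1) (hW1 : W 1 = X - C (-(p + β)))
    (hW2 : W 2 = (X - C β) * W 1 - C α₁)
    (hWrec : ∀ n : ℕ, W (n+3) = (X - C (if n % 2 = 0 then -(p + β) else β)) * W (n+2)
        - C (if n % 2 = 0 then α₂ else α₁) * W (n+1) - C ((-1 : ℂ)^(n+1) * γ) * W n)
    (P R A B : ℕ → Polynomial ℂ)
    (hP : ∀ n, (P n).Monic ∧ (P n).natDegree = n)
    (hR : ∀ n, (R n).Monic ∧ (R n).natDegree = n)
    (hA : ∀ n, (A n).natDegree ≤ n)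
    (hB : ∀ n, (B n).natDegree ≤ n)
    (hQDe : ∀ n, W (2*n) = (P n).comp (X^2 + C p * X + C q)
        + (X - C a) * (prevP A n).comp (X^2 + C p * X + C q))
    (hQDo : ∀ n, W (2*n+1) = (B n).comp (X^2 + C p * X + C q)
        + (X - C a) * (R n).comp (X^2 + C p * X + C q)) :
    R 0 = 1 ∧
    R 1 = X - C (q + α₁ + α₂ + (p + β) * β) ∧
    R 2 = (X - C (q + α₁ + α₂ + (p + β) * β)) * R 1 - C (α₁ * α₂ + γ * (p + 2*β)) ∧
    (∀ m : ℕ, R (m+3) = (X - C (q + α₁ + α₂ + (p + β) * β)) * R (m+2)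
        - C (α₁ * α₂ + γ * (p + 2*β)) * R (m+1) - C (γ^2) * R m) ∧
    γ^2 ≠ 0 := by
  have key := right_eq_zero_of_comp_add_eq_zero p q a
  have hodd : ∀ k, W (2*k+3) = (X + C p + C β) * W (2*k+2) - C α₂ * W (2*k+1)
      + C γ * W (2*k) := by
    intro k
    have h := hWrec (2*k)
    have hs : (-1 : ℂ)^(2*k+1) = -1 := by rw [pow_succ, pow_mul]; simp
    simp only [Nat.mul_mod_right, if_true, hs] at h
    rw [h]
    simp only [map_neg, map_add, map_mul, map_one]
    ring
  have heven : ∀ k, W (2*k+4) = (X - C β) * W (2*k+3) - C α₁ * W (2*k+2)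
      - C γ * W (2*k+1) := by
    intro k
    have h := hWrec (2*k+1)
    have hm : (2*k+1) % 2 ≠ 0 := by omega
    have hs : (-1 : ℂ)^(2*k+1+1) = 1 := by rw [add_assoc, pow_add, pow_mul]; simp
    simp only [if_neg hm, hs, one_mul] at h
    exact h
  have hQ0 := hQDo 0
  have hQ1 := hQDo 1
  have hQ2 := hQDo 2
  have ho0 := hodd 0
  have ho1 := hodd 1
  have he0 := heven 0
  norm_num at hQ0 hQ1 hQ2 ho0 ho1 he0
  have hR0 : R 0 = 1 := (hR 0).1.natDegree_eq_zero.mp (hR 0).2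
  refine ⟨hR0, ?_, ?_, ?_, pow_ne_zero 2 hγ⟩
  · -- `W 3 = (ω - c) * W 1 + γ` with `c = q + α₁ + α₂ + (p + β) β`
    rw [← mul_one (X - C (q + α₁ + α₂ + (p + β) * β)), ← hR0, ← sub_eq_zero]
    refine key (B 1 - (X - C (q + α₁ + α₂ + (p + β) * β)) * B 0 - C γ) _ ?_
    simp only [sub_comp, mul_comp, X_comp, C_comp]
    simp only [map_add, map_mul]
    simp only [map_neg, map_add] at hW1
    linear_combination ho0 - hQ1
      + (X^2 + C p * X - (C α₁ + C α₂ + (C p + C β) * C β)) * hQ0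
      + (X + C p + C β) * hW2 + C γ * hW0 + C α₁ * hW1
  · -- `W 5 = (ω - c) * W 3 - (α₁ α₂ + γ (p + 2 β)) * W 1` with the same `c`
    rw [← mul_one (C (α₁ * α₂ + γ * (p + 2*β))), ← hR0, ← sub_eq_zero]
    refine key (B 2 - ((X - C (q + α₁ + α₂ + (p + β) * β)) * B 1
      - C (α₁ * α₂ + γ * (p + 2*β)) * B 0)) _ ?_
    simp only [sub_comp, mul_comp, X_comp, C_comp]
    simp only [map_add, map_mul]
    rw [show (C (2:ℂ) : Polynomial ℂ) = 2 from rfl]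
    linear_combination ho1 - hQ2
      + (X^2 + C p * X - (C α₁ + C α₂ + (C p + C β) * C β)) * hQ1
      - (C α₁ * C α₂ + C γ * (C p + 2 * C β)) * hQ0
      + (X + C p + C β) * he0 + C γ * hW2 + C α₁ * ho0
      + C α₁ * C γ * hW0
  · intro m
    have h0 := hQDo m
    have h1 : W (2*m+3) = _ := hQDo (m+1)
    have h2 : W (2*m+5) = _ := hQDo (m+2)
    have h3 : W (2*m+7) = _ := hQDo (m+3)
    have o1 : W (2*m+5) = (X + C p + C β) * W (2*m+4) - C α₂ * W (2*m+3)
      + C γ * W (2*m+2) := hodd (m+1)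
    have o2 : W (2*m+7) = (X + C p + C β) * W (2*m+6) - C α₂ * W (2*m+5)
      + C γ * W (2*m+4) := hodd (m+2)
    have e0 := heven m
    have e1 : W (2*m+6) = (X - C β) * W (2*m+5) - C α₁ * W (2*m+4)
      - C γ * W (2*m+3) := heven (m+1)
    rw [← sub_eq_zero]
    refine key (B (m+3) - ((X - C (q + α₁ + α₂ + (p + β) * β)) * B (m+2)
      - C (α₁ * α₂ + γ * (p + 2*β)) * B (m+1) - C (γ^2) * B m)) _ ?_
    simp only [sub_comp, mul_comp, X_comp, C_comp]
    simp only [map_add, map_mul, map_pow]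
    rw [show (C (2:ℂ) : Polynomial ℂ) = 2 from rfl]
    -- `o2 + α₁ * o1` and `(x + p + β) * e1 + γ * e0` realise the elimination of the even terms
    linear_combination o2 + C α₁ * o1 + (X + C p + C β) * e1 + C γ * e0 - h3
      + (X^2 + C p * X - (C α₁ + C α₂ + (C p + C β) * C β)) * h2
      - (C α₁ * C α₂ + C γ * (C p + 2 * C β)) * h1
      - C γ ^ 2 * h0
end

section
/- Let β, α₁, α₂, p, q, a ∈ ℂ and γ ∈ ℂ∖{0} with p = −β − a, let {W_n} be the 2-orthogonal MPS with recurrence coefficients β_{2n} = −(p+β), β_{2n+1} = β (n ≥ 0), α_{2n+1} = α₁, α_{2n+2} = α₂ (n ≥ 0), γ_n = (−1)ⁿγ (n ≥ 1), and let {P_n}, {R_n}, {a_n}, {b_n} be its general quadratic decomposition with respect to ω(x) = x² + px + q and a. Then b_0 = 0 and b_n(x) = γ·R_{n−1}(x) for all n ≥ 1; consequently W_{2n+1}(x) = γ·R_{n−1}(x² + px + q) + (x − a)·R_n(x² + px + q) for all n ≥ 1. -/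
/-!
With `p = -β - a` one has `β_{2n} = a` and `ω(x) - ω(a) = (x - a)(x - β)`, so multiplication by
`x - a` or `x - β` acts on pairs `(f, g) ↔ f(ω) + (x - a) g(ω)` with coefficients in `ℂ[ω]`. Such a
decomposition is unique (`qd_unique`, by parity of degrees), so the recurrence of `W` splits into
recurrences for the components. In them the signs of `γ_n` give
`a_{n+1} = b_{n+1} - α₁ a_n - γ R_n`, while `b_{n+2} = γ P_{n+1} - α₂ b_{n+1}` and
`R_{n+1} = P_{n+1} - α₂ R_n` as long as the `a_k` vanish. Hence `a_n = 0` and `b_{n+1} = γ R_n`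
follow by a simultaneous induction.
-/

open Polynomial

/-- If `f(ω) + (x - a) g(ω) = 0` then `f = g = 0`: otherwise the first summand has even degree
and the second one odd degree. -/
lemma qd_eq_zero (p q a : ℂ) (f g : ℂ[X])
    (h : f.comp (X^2 + C p * X + C q) + (X - C a) * g.comp (X^2 + C p * X + C q) = 0) :
    f = 0 ∧ g = 0 := by
  have hd : (X^2 + C p * X + C q : ℂ[X]).natDegree = 2 := by compute_degree!
  have key : ∀ u : ℂ[X], u.comp (X^2 + C p * X + C q) = 0 → u = 0 := by
    intro u hu
    rcases comp_eq_zero_iff.mp hu with h | ⟨_, h⟩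
    · exact h
    · rw [h, natDegree_C] at hd
      omega
  have hg : g = 0 := by
    by_contra hg
    have hg' : g.comp (X^2 + C p * X + C q) ≠ 0 := fun h0 => hg (key g h0)
    have e := congrArg natDegree (eq_neg_of_add_eq_zero_left h)
    rw [natDegree_neg, natDegree_mul (X_sub_C_ne_zero a) hg', natDegree_comp, natDegree_comp, hd,
      natDegree_X_sub_C] at e
    omega
  subst hg
  exact ⟨key f (by simpa using h), rfl⟩

lemma qd_unique (p q a : ℂ) (f g f' g' : ℂ[X])
    (h : f.comp (X^2 + C p * X + C q) + (X - C a) * g.comp (X^2 + C p * X + C q)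
      = f'.comp (X^2 + C p * X + C q) + (X - C a) * g'.comp (X^2 + C p * X + C q)) :
    f = f' ∧ g = g' := by
  have := qd_eq_zero p q a (f - f') (g - g') (by
    rw [sub_comp, sub_comp]
    linear_combination h)
  exact ⟨sub_eq_zero.mp this.1, sub_eq_zero.mp this.2⟩

theorem stmt_15 (β α₁ α₂ p q a γ : ℂ) (hγ : γ ≠ 0) (hp : p = -β - a)
    (W : ℕ → Polynomial ℂ)
    (hW0 : W 0 = 1) (hW1 : W 1 = X - C (-(p + β)))
    (hW2 : W 2 = (X - C β) * W 1 - C α₁)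
    (hWrec : ∀ n : ℕ, W (n+3) = (X - C (if n % 2 = 0 then -(p + β) else β)) * W (n+2)
        - C (if n % 2 = 0 then α₂ else α₁) * W (n+1) - C ((-1 : ℂ)^(n+1) * γ) * W n)
    (P R A B : ℕ → Polynomial ℂ)
    (hP : ∀ n, (P n).Monic ∧ (P n).natDegree = n)
    (hR : ∀ n, (R n).Monic ∧ (R n).natDegree = n)
    (hA : ∀ n, (A n).natDegree ≤ n)
    (hB : ∀ n, (B n).natDegree ≤ n)
    (hQDe : ∀ n, W (2*n) = (P n).comp (X^2 + C p * X + C q)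
        + (X - C a) * (prevP A n).comp (X^2 + C p * X + C q))
    (hQDo : ∀ n, W (2*n+1) = (B n).comp (X^2 + C p * X + C q)
        + (X - C a) * (R n).comp (X^2 + C p * X + C q)) :
    B 0 = 0 ∧
    (∀ n : ℕ, B (n+1) = C γ * R n) ∧
    (∀ m : ℕ, W (2*m+3) = C γ * (R m).comp (X^2 + C p * X + C q)
        + (X - C a) * (R (m+1)).comp (X^2 + C p * X + C q)) := by
  subst hp
  have hb : -((-β - a) + β) = a := by ring
  simp only [hb] at hW1 hWrec
  have o0 := hQDo 0
  have e1 := hQDe 1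
  have hodd : ∀ n, W (2*(n+1)+1) = (X - C a) * W (2*(n+1)) - C α₂ * W (2*n+1) + C γ * W (2*n) := by
    intro n
    have h := hWrec (2*n)
    have h1 : (2*n) % 2 = 0 := by omega
    have h2 : (-1 : ℂ)^(2*n+1) * γ = -γ := by simp [pow_succ, pow_mul]
    rw [if_pos h1, if_pos h1, h2, C_neg] at h
    rw [show 2*(n+1)+1 = 2*n+3 by ring, show 2*(n+1) = 2*n+2 by ring]
    linear_combination h
  have heven : ∀ n, W (2*(n+2)) = (X - C β) * W (2*(n+1)+1) - C α₁ * W (2*(n+1))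
      - C γ * W (2*n+1) := by
    intro n
    have h := hWrec (2*n+1)
    have h1 : ¬ (2*n+1) % 2 = 0 := by omega
    have h2 : (-1 : ℂ)^(2*n+1+1) * γ = γ := by simp [pow_succ, pow_mul]
    rw [if_neg h1, if_neg h1, h2] at h
    rw [show 2*(n+2) = 2*n+1+3 by ring, show 2*(n+1)+1 = 2*n+1+2 by ring,
      show 2*(n+1) = 2*n+1+1 by ring]
    exact h
  have hP0 : P 0 = 1 := (hP 0).1.natDegree_eq_zero.mp (hP 0).2
  have hR0 : R 0 = 1 := (hR 0).1.natDegree_eq_zero.mp (hR 0).2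
  have hB0 : B 0 = 0 := by
    refine (qd_unique (-β - a) q a (B 0) (R 0) 0 1 ?_).1
    rw [← o0, hW1]
    simp
  -- `t = X - ω(a)` represents `(x - a)(x - β)` after composition with `ω`.
  obtain ⟨t, ht⟩ : ∃ t : ℂ[X], t.comp (X^2 + C (-β - a) * X + C q) = (X - C a) * (X - C β) := by
    refine ⟨X - C (q - a * β), ?_⟩
    rw [sub_comp, X_comp, C_comp]
    simp only [C_sub, C_neg, C_mul]
    ring
  have hA0 : A 0 = 0 := by
    refine (qd_unique (-β - a) q a (P 1) (A 0) (t - C α₁) 0 ?_).2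
    have e1' : W 2 = _ := e1
    rw [show A 0 = prevP A 1 from rfl, ← e1', hW2, hW1, sub_comp, ht]
    simp only [C_comp, zero_comp]
    ring
  have hOstep : ∀ n, A n = 0 → prevP A n = 0 →
      B (n+1) = C γ * P n - C α₂ * B n ∧ R (n+1) = P (n+1) - C α₂ * R n := by
    intro n h1 h2
    refine qd_unique (-β - a) q a _ _ _ _ ?_
    rw [← hQDo, hodd, hQDe (n+1), hQDo n, hQDe n, h2, show prevP A (n+1) = A n from rfl, h1]
    simp only [sub_comp, mul_comp, C_comp, zero_comp]
    ring
  have hEstep : ∀ n, A n = 0 → A (n+1) = B (n+1) - C γ * R n := by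
    intro n h1
    refine (qd_unique (-β - a) q a (P (n+2)) _
      (t * R (n+1) + C (a - β) * B (n+1) - C α₁ * P (n+1) - C γ * B n) _ ?_).2
    rw [show A (n+1) = prevP A (n+2) from rfl, ← hQDe, heven, hQDo (n+1), hQDe (n+1), hQDo n,
      show prevP A (n+1) = A n from rfl, h1]
    simp only [sub_comp, mul_comp, add_comp, C_comp, zero_comp, ht]
    rw [show C (a - β) = C a - C β from C_sub]
    ring
  have main : ∀ n, A n = 0 ∧ prevP A n = 0 ∧ B (n+1) = C γ * R n := by
    intro n
    induction n with
    | zero =>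
      refine ⟨hA0, rfl, ?_⟩
      rw [(hOstep 0 hA0 rfl).1, hB0, hP0, hR0]
      ring
    | succ n ih =>
      obtain ⟨i1, i2, i3⟩ := ih
      have j1 : A (n+1) = 0 := by rw [hEstep n i1, i3, sub_self]
      refine ⟨j1, i1, ?_⟩
      rw [(hOstep (n+1) j1 i1).1, (hOstep n i1 i2).2, i3]
      ring
  refine ⟨hB0, fun n => (main n).2.2, fun m => ?_⟩
  have h := hQDo (m+1)
  rw [(main m).2.2, mul_comp, C_comp] at h
  exact h
end

section
/- Let β, α₁, α₂, p, q, a ∈ ℂ and γ ∈ ℂ∖{0} with p ≠ −β − a, let {W_n} be the 2-orthogonal MPS with recurrence coefficients β_{2n} = −(p+β), β_{2n+1} = β (n ≥ 0), α_{2n+1} = α₁, α_{2n+2} = α₂ (n ≥ 0), γ_n = (−1)ⁿγ (n ≥ 1), and let {P_n}, {R_n}, {a_n}, {b_n} be its general quadratic decomposition with respect to ω(x) = x² + px + q and a. Then every b_n has degree exactly n with leading coefficient a + p + β, and the MPS B_n := (a + p + β)^{−1}·b_n is 2-orthogonal with: B_0 = 1, B_1(x) = x − (q + α₁ + α₂ +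 (aβ(p+β) + β(p+β)² − γ)/(a + p + β)), B_{n+1}(x) = (x − (q + α₁ + α₂ + (p+β)β))·B_n(x) − (α₁α₂ + γ(p + 2β))·B_{n−1}(x) − γ²·B_{n−2}(x) for n ≥ 2, and B_2(x) = (x − (q + α₁ + α₂ + (p+β)β))·B_1(x) − (α₁α₂ + γ(p + 2β)). -/
/-!
Write `O n = W (2 n + 1)` and `E n = W (2 n)`. The recurrence of `W` couples the two subsequences by
`(S + α₂) O = ((x + p + β) S + γ) E` and `(S² + α₁ S) E = ((x - β) S - γ) O`, with `S` the shift.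
Eliminating `E`, and using `(x - β)(x + p + β) = ω - q - β (p + β)`, gives a recurrence for `O`
whose coefficients are polynomials in `ω`. Since `ℂ[x] = ℂ[ω] ⊕ (x - a) ℂ[ω]`
(`comp_quadratic_unique`), the component `B n` of `O n` in `ℂ[ω]` satisfies the same recurrence, and
the initial terms are read off from `O 0`, `O 1`, `O 2`. The leading coefficient follows by
comparing the coefficients of degree `n` in the recurrence.
-/

open Polynomial

/-- The sum `ℂ[ω] + (x - a) ℂ[ω]` is direct, because a nonzero element of the first summand has even
degree and one of the second has odd degree. -/
lemma comp_quadratic_eq_zero (p q a : ℂ) (f g : ℂ[X])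
    (h : f.comp (X^2 + C p * X + C q) + (X - C a) * g.comp (X^2 + C p * X + C q) = 0) :
    f = 0 := by
  have hω : (X^2 + C p * X + C q : ℂ[X]).natDegree = 2 := by
    compute_degree!
  by_cases hg : g = 0
  · subst hg
    simp only [zero_comp, mul_zero, add_zero] at h
    rcases comp_eq_zero_iff.1 h with h | ⟨_, h⟩
    · exact h
    · rw [h, natDegree_C] at hω
      omega
  · exfalso
    have hg' : g.comp (X^2 + C p * X + C q) ≠ 0 := by
      intro h0
      rcases comp_eq_zero_iff.1 h0 with h0 | ⟨_, h0⟩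
      · exact hg h0
      · rw [h0, natDegree_C] at hω
        omega
    have h1 := congrArg natDegree (eq_neg_of_add_eq_zero_left h)
    rw [natDegree_neg, natDegree_mul (X_sub_C_ne_zero a) hg', natDegree_comp, natDegree_comp, hω,
      natDegree_X_sub_C] at h1
    omega

lemma comp_quadratic_unique (p q a : ℂ) (f g f' g' : ℂ[X])
    (h : f.comp (X^2 + C p * X + C q) + (X - C a) * g.comp (X^2 + C p * X + C q)
      = f'.comp (X^2 + C p * X + C q) + (X - C a) * g'.comp (X^2 + C p * X + C q)) :
    f = f' := by
  refine sub_eq_zero.1 (comp_quadratic_eq_zero p q a (f - f') (g - g') ?_)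
  rw [sub_comp, sub_comp]
  linear_combination h

theorem stmt_16 (β α₁ α₂ p q a γ : ℂ) (hγ : γ ≠ 0) (hp : p ≠ -β - a)
    (W : ℕ → Polynomial ℂ)
    (hW0 : W 0 = 1) (hW1 : W 1 = X - C (-(p + β)))
    (hW2 : W 2 = (X - C β) * W 1 - C α₁)
    (hWrec : ∀ n : ℕ, W (n+3) = (X - C (if n % 2 = 0 then -(p + β) else β)) * W (n+2)
        - C (if n % 2 = 0 then α₂ else α₁) * W (n+1) - C ((-1 : ℂ)^(n+1) * γ) * W n)
    (P R A B : ℕ → Polynomial ℂ)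
    (hP : ∀ n, (P n).Monic ∧ (P n).natDegree = n)
    (hR : ∀ n, (R n).Monic ∧ (R n).natDegree = n)
    (hA : ∀ n, (A n).natDegree ≤ n)
    (hB : ∀ n, (B n).natDegree ≤ n)
    (hQDe : ∀ n, W (2*n) = (P n).comp (X^2 + C p * X + C q)
        + (X - C a) * (prevP A n).comp (X^2 + C p * X + C q))
    (hQDo : ∀ n, W (2*n+1) = (B n).comp (X^2 + C p * X + C q)
        + (X - C a) * (R n).comp (X^2 + C p * X + C q)) :
    (∀ n, (B n).natDegree = n ∧ (B n).leadingCoeff = a + p + β) ∧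
    C ((a + p + β)⁻¹) * B 0 = 1 ∧
    C ((a + p + β)⁻¹) * B 1
      = X - C (q + α₁ + α₂ + (a * β * (p + β) + β * (p + β)^2 - γ) / (a + p + β)) ∧
    C ((a + p + β)⁻¹) * B 2
      = (X - C (q + α₁ + α₂ + (p + β) * β)) * (C ((a + p + β)⁻¹) * B 1)
        - C (α₁ * α₂ + γ * (p + 2*β)) ∧
    (∀ m : ℕ, C ((a + p + β)⁻¹) * B (m+3)
      = (X - C (q + α₁ + α₂ + (p + β) * β)) * (C ((a + p + β)⁻¹) * B (m+2))
        - C (α₁ * α₂ + γ * (p + 2*β)) * (C ((a + p + β)⁻¹) * B (m+1))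
        - C (γ^2) * (C ((a + p + β)⁻¹) * B m)) := by
  have hs : a + p + β ≠ 0 := fun h => hp (by linear_combination h)
  have hodd : ∀ k, W (2*k+3) = (X + C p + C β) * W (2*k+2) - C α₂ * W (2*k+1)
      + C γ * W (2*k) := by
    intro k
    have h := hWrec (2*k)
    have h2 : (2*k) % 2 = 0 := by omega
    rw [if_pos h2, if_pos h2, pow_succ, pow_mul] at h
    simp only [even_two, Even.neg_pow, one_pow, one_mul, neg_mul, C_neg, C_add] at h
    linear_combination h
  have heven : ∀ k, W (2*k+4) = (X - C β) * W (2*k+3) - C α₁ * W (2*k+2)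
      - C γ * W (2*k+1) := by
    intro k
    have h := hWrec (2*k+1)
    have h2 : ¬ (2*k+1) % 2 = 0 := by omega
    rw [if_neg h2, if_neg h2, pow_succ, pow_succ, pow_mul] at h
    simp only [even_two, Even.neg_pow, one_pow, one_mul, neg_mul, mul_neg, mul_one, neg_neg] at h
    linear_combination h
  have hrecO : ∀ k, W (2*k+7) = (X^2 + C p * X + C q
        - (C q + C α₁ + C α₂ + (C p + C β) * C β)) * W (2*k+5)
      - (C α₁ * C α₂ + C γ * (C p + 2 * C β)) * W (2*k+3) - C γ^2 * W (2*k+1) := by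
    intro k
    have o1 := hodd k
    have o2 := hodd (k+1)
    have o3 := hodd (k+2)
    have e1 := heven k
    have e2 := heven (k+1)
    simp only [mul_add, mul_one, add_assoc, Nat.reduceAdd, Nat.reduceMul] at o1 o2 o3 e1 e2 ⊢
    linear_combination o3 + C α₁ * o2 + (X + C p + C β) * e2 + C γ * e1
  have hO0 : W 1 = X + C p + C β := by
    rw [hW1, C_neg, C_add]; ring
  have hO1 : W 3 = (X^2 + C p * X + C q
        - (C q + C α₁ + C α₂ + (C p + C β) * C β)) * (X + C p + C β) + C γ := by
    have o1 := hodd 0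
    simp only [mul_zero, zero_add] at o1
    rw [o1, hW2, hO0, hW0]; ring
  have hO2 : W 5 = (X^2 + C p * X + C q
        - (C q + C α₁ + C α₂ + (C p + C β) * C β)) * W 3
      - (C α₁ * C α₂ + C γ * (C p + 2 * C β)) * W 1 := by
    have o1 := hodd 0
    have o2 := hodd 1
    have e1 := heven 0
    simp only [mul_zero, zero_add, mul_one, Nat.reduceAdd] at o1 o2 e1
    rw [hW0] at o1
    linear_combination o2 + (X + C p + C β) * e1 + C α₁ * o1 + C γ * hW2
  have hB0 : B 0 = C a + C p + C β := by
    apply comp_quadratic_unique p q a _ (R 0) _ 1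
    rw [← hQDo 0, mul_zero, zero_add, hO0]
    simp only [add_comp, C_comp, one_comp]
    ring
  have hB1 : B 1 = (X - (C q + C α₁ + C α₂ + (C p + C β) * C β)) * (C a + C p + C β) + C γ := by
    apply comp_quadratic_unique p q a _ (R 1) _ (X - (C q + C α₁ + C α₂ + (C p + C β) * C β))
    rw [← hQDo 1, mul_one, hO1]
    simp only [add_comp, sub_comp, mul_comp, C_comp, X_comp]
    ring
  have hB2 : B 2 = (X - (C q + C α₁ + C α₂ + (C p + C β) * C β)) * B 1
      - (C α₁ * C α₂ + C γ * (C p + 2 * C β)) * B 0 := by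
    apply comp_quadratic_unique p q a _ (R 2) _
      ((X - (C q + C α₁ + C α₂ + (C p + C β) * C β)) * R 1
      - (C α₁ * C α₂ + C γ * (C p + 2 * C β)) * R 0)
    have h0 := hQDo 0
    have h1 := hQDo 1
    rw [mul_zero, zero_add] at h0
    rw [mul_one] at h1
    rw [← hQDo 2, hO2, h0, h1]
    simp only [add_comp, sub_comp, mul_comp, C_comp, X_comp, ofNat_comp]
    ring
  have hB3 : ∀ m, B (m+3) = (X - (C q + C α₁ + C α₂ + (C p + C β) * C β)) * B (m+2)
      - (C α₁ * C α₂ + C γ * (C p + 2 * C β)) * B (m+1) - C γ^2 * B m := by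
    intro m
    apply comp_quadratic_unique p q a _ (R (m+3)) _
      ((X - (C q + C α₁ + C α₂ + (C p + C β) * C β)) * R (m+2)
      - (C α₁ * C α₂ + C γ * (C p + 2 * C β)) * R (m+1) - C γ^2 * R m)
    have h := hrecO m
    have h0 := hQDo m
    have h1 := hQDo (m+1)
    have h2 := hQDo (m+2)
    have h3 := hQDo (m+3)
    simp only [mul_add, mul_one, add_assoc, Nat.reduceAdd, Nat.reduceMul] at h h0 h1 h2 h3 ⊢
    rw [← h3, h, h0, h1, h2]
    simp only [add_comp, sub_comp, mul_comp, C_comp, X_comp, ofNat_comp, pow_comp]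
    ring
  have hz : ∀ n k, n < k → (B n).coeff k = 0 := fun n k h =>
    coeff_eq_zero_of_natDegree_lt ((hB n).trans_lt h)
  -- Only `X * B n` contributes to the coefficient of degree `n + 1` in the recurrence.
  have hstep : ∀ n (c : ℂ), ((X - C c) * B n).coeff (n+1) = (B n).coeff n := by
    intro n c
    rw [sub_mul, coeff_sub, coeff_X_mul, coeff_C_mul, hz n (n+1) (by omega), mul_zero, sub_zero]
  have hcC : (C q + C α₁ + C α₂ + (C p + C β) * C β : ℂ[X]) = C (q + α₁ + α₂ + (p + β) * β) := by
    simp only [C_add, C_mul]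
  have hdC : (C α₁ * C α₂ + C γ * (C p + 2 * C β) : ℂ[X]) = C (α₁ * α₂ + γ * (p + 2*β)) := by
    simp only [C_add, C_mul, C_ofNat]
  have hsC : (C a + C p + C β : ℂ[X]) = C (a + p + β) := by
    simp only [C_add]
  rw [hcC, hdC] at hB2
  simp only [hcC, hdC, ← C_pow] at hB3
  rw [hcC, hsC] at hB1
  rw [hsC] at hB0
  have hc0 : (B 0).coeff 0 = a + p + β := by rw [hB0, coeff_C_zero]
  have hc1 : (B 1).coeff 1 = a + p + β := by
    have h := hstep 0 (q + α₁ + α₂ + (p + β) * β)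
    rw [hB0, zero_add, coeff_C_zero] at h
    rw [hB1, coeff_add, h, coeff_C_succ, add_zero]
  have hc2 : (B 2).coeff 2 = a + p + β := by
    rw [hB2, coeff_sub, hstep 1, coeff_C_mul, hz 0 2 (by omega), hc1, mul_zero, sub_zero]
  have hc : ∀ n, (B n).coeff n = a + p + β := by
    have h : ∀ n, (B (n+2)).coeff (n+2) = a + p + β := by
      intro n
      induction n with
      | zero => exact hc2
      | succ m ih =>
        change (B (m+3)).coeff (m+3) = _
        rw [hB3, coeff_sub, coeff_sub, hstep (m+2), coeff_C_mul, coeff_C_mul,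
          hz (m+1) (m+3) (by omega), hz m (m+3) (by omega), ih]
        ring
    intro n
    match n with
    | 0 => exact hc0
    | 1 => exact hc1
    | n+2 => exact h n
  have hinv : (C ((a + p + β)⁻¹) * C (a + p + β) : ℂ[X]) = 1 := by
    rw [← C_mul, inv_mul_cancel₀ hs, C_1]
  refine ⟨fun n => ?_, ?_, ?_, ?_, fun m => ?_⟩
  · have hd : (B n).natDegree = n :=
      le_antisymm (hB n) (le_natDegree_of_ne_zero (by rw [hc n]; exact hs))
    exact ⟨hd, by rw [leadingCoeff, hd, hc n]⟩
  · rw [hB0, hinv]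
  · have hconst : q + α₁ + α₂ + (a * β * (p + β) + β * (p + β)^2 - γ) / (a + p + β)
        = q + α₁ + α₂ + (p + β) * β - (a + p + β)⁻¹ * γ := by
      field_simp
      ring
    rw [hconst, hB1, C_sub, C_mul (a := (a + p + β)⁻¹)]
    linear_combination (X - C (q + α₁ + α₂ + (p + β) * β)) * hinv
  · rw [hB2, hB0]
    linear_combination (-C (α₁ * α₂ + γ * (p + 2*β))) * hinv
  · rw [hB3]
    ring
end

section
/- Let c, α ∈ ℂ and γ ∈ ℂ∖{0}, and let {ζ_n}_{n≥0} be the 2-orthogonal MPS with constant recurrence coefficients: ζ_0 = 1, ζ_1(x) = x − c, ζ_2(x) = (x − c)ζ_1(x) − α, and ζ_{n+1}(x) = (x − c)ζ_n(x) − α·ζ_{n−1}(x) − γ·ζ_{n−2}(x) for n ≥ 2. Then the derivative sequence ζ^{[1]}_n(x) = (n+1)^{−1}(ζ_{n+1})'(x) satisfies ζ^{[1]}_0 = 1, ζ^{[1]}_1(x) = x − c, ζ^{[1]}_2(x) = (x − c)² − (2/3)α, and ζ^{[1]}_{n+1}(x) = (x − c)·ζ^{[1]}_n(x) − α·(n(n+3)/((n+1)(n+2)))·ζ^{[1]}_{n−1}(x)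 − γ·((n−1)(n+4)/((n+1)(n+2)))·ζ^{[1]}_{n−2}(x) for n ≥ 2; in particular {ζ^{[1]}_n} is again a 2-orthogonal MPS (so {ζ_n} is 2-classical in Hahn's sense). -/
open Polynomial

/-!
The generating function `G = ∑ Z n * t ^ n = 1 / (1 - (x - c) t + α t² + γ t³)` satisfies
`∂ₓ G = t G²` and `∂ₜ G = ((x - c) - 2 α t - 3 γ t²) G²`, hence
`t ∂ₜ G = ((x - c) - 2 α t - 3 γ t²) ∂ₓ G`. Comparing coefficients gives the structure relation
`n Z n = (x - c) (Z n)' - 2 α (Z (n - 1))' - 3 γ (Z (n - 2))'`, which `structure_relation` proves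
by induction on the recurrence. Differentiating the recurrence produces one term without a
derivative, and eliminating it with the structure relation leaves a recurrence in the derivatives
alone, which is the claimed one after normalisation.
-/

lemma derivative_rec {c α γ : ℂ} {Z : ℕ → Polynomial ℂ}
    (hZrec : ∀ n : ℕ, Z (n+3) = (X - C c) * Z (n+2) - C α * Z (n+1) - C γ * Z n) (n : ℕ) :
    derivative (Z (n+3)) = Z (n+2) + (X - C c) * derivative (Z (n+2))
      - C α * derivative (Z (n+1)) - C γ * derivative (Z n) := by
  rw [hZrec n]
  simp

/-- The coefficient form of `t ∂ₜ G = ((x - c) - 2 α t - 3 γ t²) ∂ₓ G` for the generating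
function `G` of `Z`. -/
lemma structure_relation {c α γ : ℂ} {Z : ℕ → Polynomial ℂ}
    (hZ0 : Z 0 = 1) (hZ1 : Z 1 = X - C c)
    (hZ2 : Z 2 = (X - C c) * Z 1 - C α)
    (hZrec : ∀ n : ℕ, Z (n+3) = (X - C c) * Z (n+2) - C α * Z (n+1) - C γ * Z n) (n : ℕ) :
    ((n : ℂ[X]) + 2) * Z (n+2) = (X - C c) * derivative (Z (n+2))
      - 2 * C α * derivative (Z (n+1)) - 3 * C γ * derivative (Z n) := by
  have d0 : derivative (Z 0) = 0 := by simp [hZ0]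
  have d1 : derivative (Z 1) = 1 := by simp [hZ1]
  have d2 : derivative (Z 2) = 2 * (X - C c) := by
    simp [hZ2, hZ1]; ring
  have d3 := derivative_rec hZrec 0
  have d4 := derivative_rec hZrec 1
  have z3 := hZrec 0
  have z4 := hZrec 1
  norm_num at d3 d4 z3 z4
  induction n using Nat.strong_induction_on with
  | _ n ih =>
    match n with
    | 0 =>
      norm_num
      rw [d2, d1, d0, hZ2, hZ1]; ring
    | 1 =>
      norm_num
      rw [d3, z3, d2, d1, d0, hZ2, hZ1, hZ0]; ring
    | 2 =>
      norm_num
      rw [d4, z4, d3, z3, d2, d1, d0, hZ2, hZ1, hZ0]; ring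
    | k+3 =>
      have e0 := ih k (by omega)
      have e1 := ih (k+1) (by omega)
      have e2 := ih (k+2) (by omega)
      have r0 := derivative_rec hZrec k
      have r1 := derivative_rec hZrec (k+1)
      have r2 := derivative_rec hZrec (k+2)
      have z := hZrec (k+2)
      push_cast at *
      simp only [add_assoc, Nat.reduceAdd] at *
      linear_combination ((k : ℂ[X]) + 5) * z + (X - C c) * e2 - C α * e1 - C γ * e0
        - (X - C c) * r2 + 2 * C α * r1 + 3 * C γ * r0

theorem stmt_17 (c α γ : ℂ) (hγ : γ ≠ 0) (Z : ℕ → Polynomial ℂ)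
    (hZ0 : Z 0 = 1) (hZ1 : Z 1 = X - C c)
    (hZ2 : Z 2 = (X - C c) * Z 1 - C α)
    (hZrec : ∀ n : ℕ, Z (n+3) = (X - C c) * Z (n+2) - C α * Z (n+1) - C γ * Z n)
    (Z1 : ℕ → Polynomial ℂ)
    (hZ1def : ∀ n, Z1 n = C (((n : ℂ) + 1)⁻¹) * derivative (Z (n+1))) :
    Z1 0 = 1 ∧
    Z1 1 = X - C c ∧
    Z1 2 = (X - C c)^2 - C ((2/3) * α) ∧
    (∀ m : ℕ, Z1 (m+3) = (X - C c) * Z1 (m+2)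
      - C (α * (((m : ℂ) + 2) * ((m : ℂ) + 5) / (((m : ℂ) + 3) * ((m : ℂ) + 4)))) * Z1 (m+1)
      - C (γ * (((m : ℂ) + 1) * ((m : ℂ) + 6) / (((m : ℂ) + 3) * ((m : ℂ) + 4)))) * Z1 m) ∧
    (∀ m : ℕ, γ * (((m : ℂ) + 1) * ((m : ℂ) + 6) / (((m : ℂ) + 3) * ((m : ℂ) + 4))) ≠ 0) := by
  have hn : ∀ m k : ℕ, (m : ℂ) + ((k + 1 : ℕ) : ℂ) ≠ 0 := fun m k => by
    exact_mod_cast (by omega : m + (k + 1) ≠ 0)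
  have key : ∀ n : ℕ, ((n : ℂ[X]) + 1) * Z1 n = derivative (Z (n+1)) := fun n => by
    have h : ((n : ℂ) + 1) * ((n : ℂ) + 1)⁻¹ = 1 := mul_inv_cancel₀ (by simpa using hn n 0)
    have h' := congrArg (C : ℂ → ℂ[X]) h
    simp only [C_mul, C_add, C_1, map_natCast] at h'
    rw [hZ1def, ← mul_assoc, h', one_mul]
  have d2 : derivative (Z 2) = 2 * (X - C c) := by
    simp [hZ2, hZ1]; ring
  refine ⟨?_, ?_, ?_, fun m => ?_, fun m => ?_⟩
  · simpa [hZ1] using key 0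
  · have h := key 1
    norm_num [d2] at h
    exact h
  · have h := key 2
    have d3 := derivative_rec hZrec 0
    norm_num [d2] at h d3
    rw [d3, hZ2, hZ1, hZ0] at h
    simp only [derivative_sub, derivative_X, derivative_C, derivative_one] at h
    have hc : 3 * C (2 / 3 * α) = 2 * C α := by
      rw [← C_ofNat, ← C_ofNat, ← C_mul, ← C_mul]; congr 1; ring
    refine mul_left_cancel₀ (by norm_num : (3 : ℂ[X]) ≠ 0) ?_
    linear_combination h + hc
  · have h3 : (m : ℂ) + 3 ≠ 0 := by simpa using hn m 2
    have h4 : (m : ℂ) + 4 ≠ 0 := by simpa using hn m 3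
    -- Both sides are compared after multiplication by `(m + 3) (m + 4)`.
    have clear : ∀ a b : ℂ, ((m : ℂ[X]) + 3) * (m + 4) *
        C (a * (b / (((m : ℂ) + 3) * ((m : ℂ) + 4)))) = C a * C b := fun a b => by
      have e : ((m : ℂ[X]) + 3) * (m + 4) = C (((m : ℂ) + 3) * ((m : ℂ) + 4)) := by
        simp only [C_mul, C_add, map_natCast, map_ofNat]
      rw [e, ← C_mul, ← C_mul]; congr 1; field_simp
    have ne : ((m : ℂ[X]) + 3) * (m + 4) ≠ 0 :=
      mul_ne_zero (by exact_mod_cast (by omega : m + 3 ≠ 0))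
        (by exact_mod_cast (by omega : m + 4 ≠ 0))
    have cα := clear α (((m : ℂ) + 2) * ((m : ℂ) + 5))
    have cγ := clear γ (((m : ℂ) + 1) * ((m : ℂ) + 6))
    have k0 := key m
    have k1 := key (m+1)
    have k2 := key (m+2)
    have k3 := key (m+3)
    have r := derivative_rec hZrec (m+1)
    have s := structure_relation hZ0 hZ1 hZ2 hZrec (m+1)
    simp only [C_mul (a := (m : ℂ) + _), C_add, map_natCast, map_ofNat, C_1] at cα cγ
    push_cast at k1 k2 k3 s
    simp only [add_assoc, Nat.reduceAdd] at k1 k2 k3 r s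
    refine mul_left_cancel₀ ne ?_
    linear_combination ((m : ℂ[X]) + 3) * k3 - ((m : ℂ[X]) + 4) * (X - C c) * k2
      + ((m : ℂ[X]) + 5) * C α * k1 + ((m : ℂ[X]) + 6) * C γ * k0
      + ((m : ℂ[X]) + 3) * r + s + Z1 (m+1) * cα + Z1 m * cγ
  · have h1 : (m : ℂ) + 1 ≠ 0 := by simpa using hn m 0
    have h6 : (m : ℂ) + 6 ≠ 0 := by simpa using hn m 5
    have h3 : (m : ℂ) + 3 ≠ 0 := by simpa using hn m 2
    have h4 : (m : ℂ) + 4 ≠ 0 := by simpa using hn m 3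
    exact mul_ne_zero hγ (div_ne_zero (mul_ne_zero h1 h6) (mul_ne_zero h3 h4))
end

section
/- Let d ≥ 1 and let {W_n}_{n≥0} be a monic polynomial sequence over ℂ with dual sequence {w_n}. Then the following are equivalent: (a) {W_n} is d-orthogonal with respect to (w_0, …, w_{d−1}), i.e. for each ν = 0, …, d−1, ⟨w_ν, W_m W_n⟩ = 0 for all m ≥ 0 and n ≥ md + ν + 1, and ⟨w_ν, W_m W_{md+ν}⟩ ≠ 0 for all m ≥ 0; (b) {W_n} satisfies a (d+1)-order recurrence relation: there exist complex coefficients β_n (n ≥ 0) and γ^{d−1−ν}_{k} such that W_0 = 1, W_1(x) = x − β_0, W_n(x) = (x − β_{n−1})W_{n−1}(x) − Σ_{ν=0}^{n−2} γ^{d−1−ν}_{n−1−ν} W_{n−2−ν}(x) for 2 ≤ n ≤ d (when d ≥ 2), W_{m+d+1}(x) = (x − β_{m+d})W_{m+d}(x) − Σ_{ν=0}^{d−1} γ^{d−1−ν}_{m+d−ν} W_{m+d−1−ν}(x) for all m ≥ 0, and the regularity conditions γ^{0}_{m+1} ≠ 0 hold for all m ≥ 0. -/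
open Polynomial

/-!
Everything passes through the *band condition*: for every `j`, the functional `p ↦ ⟨w_j, X p⟩`
kills `W_n` for `n > j + d` and does not kill `W_{j+d}`.

The band condition is the recurrence read off coefficientwise, since the coefficient of `W_j` in
`X W_n` is `⟨w_j, X W_n⟩` (`recurrence_of_band`, `band_of_recurrence`).

If the band condition holds, then `X w_j` is a combination of `w_0, …, w_{j+d}` with nonzero
coefficient at `w_{j+d}` (a functional killing `W_n` for `n ≥ N` is a combination of
`w_0, …, w_{N-1}`, `functional_expand`). By iteration `X^m w_ν` is a combination of
`w_0, …, w_{md+ν}` with nonzero top coefficient, and since `W_m` is monic of degree `m`, so is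
`W_m w_ν`: this is `d`-orthogonality (`orthogonal_of_band`).

Conversely, let `j = md + ν` with `ν < d`. By `d`-orthogonality `W_m w_ν` is a combination of
`w_0, …, w_j` with nonzero coefficient at `w_j`. Multiplying by `X` and solving for `X w_j`, the
band condition at `j` follows from that at all `k < j` and from the orthogonality properties of
`(X W_m) w_ν`, where `X W_m` is monic of degree `m + 1` (`band_of_orthogonal`).
-/

section DualSequence

variable {W : ℕ → Polynomial ℂ} {w : ℕ → Module.Dual ℂ (Polynomial ℂ)}

lemma exists_expand (hW : ∀ n, (W n).Monic ∧ (W n).natDegree = n) (m : ℕ) :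
    ∀ p : Polynomial ℂ, p.degree < m → ∃ c : ℕ → ℂ, p = ∑ k ∈ Finset.range m, c k • W k := by
  induction m with
  | zero =>
    intro p hp
    refine ⟨0, ?_⟩
    rw [degree_lt_iff_coeff_zero] at hp
    ext k
    simpa using hp k (Nat.zero_le k)
  | succ m ih =>
    intro p hp
    have hlt : (p - p.coeff m • W m).degree < m := by
      rw [degree_lt_iff_coeff_zero] at hp ⊢
      intro k hk
      have hWm : (W m).coeff m = 1 := by
        have := (hW m).1.coeff_natDegree
        rwa [(hW m).2] at this
      rcases hk.eq_or_lt with rfl | hk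
      · simp [hWm]
      · have h1 : (W m).coeff k = 0 := coeff_eq_zero_of_natDegree_lt (by rw [(hW m).2]; exact hk)
        simp [h1, hp k hk]
    obtain ⟨c, hc⟩ := ih _ hlt
    refine ⟨fun k => if k = m then p.coeff m else c k, ?_⟩
    simp only [Finset.sum_range_succ, if_true]
    have : ∑ k ∈ Finset.range m, (if k = m then p.coeff m else c k) • W k
        = ∑ k ∈ Finset.range m, c k • W k := by
      refine Finset.sum_congr rfl fun k hk => ?_
      rw [if_neg (Finset.mem_range.mp hk).ne]
    rw [this, ← hc]
    ring

lemma degree_X_mul_sub_lt (hW : ∀ n, (W n).Monic ∧ (W n).natDegree = n) (n : ℕ) :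
    (X * W n - W (n+1)).degree < ((n + 1 : ℕ) : WithBot ℕ) := by
  have hm : (X * W n).Monic := monic_X.mul (hW n).1
  have hdeg : (X * W n).natDegree = n + 1 := by
    rw [monic_X.natDegree_mul (hW n).1, natDegree_X, (hW n).2, add_comm]
  have hd1 : (X * W n).degree = ((n + 1 : ℕ) : WithBot ℕ) := by
    rw [degree_eq_natDegree hm.ne_zero, hdeg]
  have hd2 : (W (n+1)).degree = ((n + 1 : ℕ) : WithBot ℕ) := by
    rw [degree_eq_natDegree (hW (n+1)).1.ne_zero, (hW (n+1)).2]
  rw [← hd1]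
  exact degree_sub_lt_left (by rw [hd1, hd2]) hm.ne_zero
    (by rw [hm.leadingCoeff, (hW (n+1)).1.leadingCoeff])

lemma expand (hW : ∀ n, (W n).Monic ∧ (W n).natDegree = n)
    (hw : ∀ n m, w n (W m) = if n = m then 1 else 0) {m : ℕ} {p : Polynomial ℂ}
    (hp : p.degree < m) : p = ∑ k ∈ Finset.range m, w k p • W k := by
  obtain ⟨c, hc⟩ := exists_expand hW m p hp
  have : ∀ j ∈ Finset.range m, w j p • W j = c j • W j := by
    intro j hj
    rw [hc]
    simp only [map_sum, map_smul, hw, smul_eq_mul, mul_ite, mul_one, mul_zero,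
      Finset.sum_ite_eq, hj, if_true]
  rw [Finset.sum_congr rfl this]
  exact hc

lemma dual_eq_zero_of_degree_lt (hW : ∀ n, (W n).Monic ∧ (W n).natDegree = n)
    (hw : ∀ n m, w n (W m) = if n = m then 1 else 0) {j : ℕ} {p : Polynomial ℂ}
    (hp : p.degree < j) : w j p = 0 := by
  obtain ⟨c, hc⟩ := exists_expand hW j p hp
  rw [hc]
  simp [hw]

lemma exists_degree_lt (p : Polynomial ℂ) (N : ℕ) : ∃ m, N ≤ m ∧ p.degree < (m : ℕ) :=
  ⟨max N (p.natDegree + 1), le_max_left _ _, lt_of_le_of_lt degree_le_natDegree (by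
    exact_mod_cast lt_of_lt_of_le (Nat.lt_succ_self _) (le_max_right N (p.natDegree + 1)))⟩

lemma eq_of_dual_eq (hW : ∀ n, (W n).Monic ∧ (W n).natDegree = n)
    (hw : ∀ n m, w n (W m) = if n = m then 1 else 0) {p q : Polynomial ℂ}
    (h : ∀ j, w j p = w j q) : p = q := by
  obtain ⟨m, -, hm⟩ := exists_degree_lt (p - q) 0
  rw [← sub_eq_zero, expand hW hw hm]
  simp [h]

/-- A functional vanishing on `W n` for all `n ≥ N` is a combination of `w 0, …, w (N - 1)`. -/
lemma functional_expand (hW : ∀ n, (W n).Monic ∧ (W n).natDegree = n)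
    (hw : ∀ n m, w n (W m) = if n = m then 1 else 0) (u : Module.Dual ℂ (Polynomial ℂ)) (N : ℕ)
    (hu : ∀ n, N ≤ n → u (W n) = 0) (p : Polynomial ℂ) :
    u p = ∑ k ∈ Finset.range N, u (W k) * w k p := by
  obtain ⟨m, hNm, hm⟩ := exists_degree_lt p N
  conv_lhs => rw [expand hW hw hm]
  simp only [map_sum, map_smul, smul_eq_mul]
  symm
  rw [Finset.sum_subset (Finset.range_mono hNm)]
  · exact Finset.sum_congr rfl fun k _ => mul_comm _ _
  · intro k _ hk
    rw [hu k (by simpa using hk), zero_mul]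

/-- The band condition: `⟨w_j, X W_n⟩` vanishes for `n > j + d` and not for `n = j + d`. -/
def Band (d : ℕ) (W : ℕ → Polynomial ℂ) (w : ℕ → Module.Dual ℂ (Polynomial ℂ)) : Prop :=
  ∀ j, (∀ n, j + d < n → w j (X * W n) = 0) ∧ w j (X * W (j + d)) ≠ 0

lemma band_of_recurrence {d : ℕ} (hd : 1 ≤ d)
    (hw : ∀ n m, w n (W m) = if n = m then 1 else 0) (β : ℕ → ℂ) (g : ℕ → ℕ → ℂ)
    (h : ∀ m, W (m+d+1) = (X - C (β (m+d))) * W (m+d)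
          - ∑ ν ∈ Finset.range d, C (g (d-1-ν) (m+d-ν)) * W (m+d-1-ν))
    (hg : ∀ m, g 0 (m+1) ≠ 0) : Band d W w := by
  have key : ∀ j m, j ≤ m → w j (X * W (m + d)) = if j = m then g 0 (m + 1) else 0 := by
    intro j m hjm
    have e : X * W (m + d) = W (m+d+1) + β (m+d) • W (m+d)
        + ∑ ν ∈ Finset.range d, g (d-1-ν) (m+d-ν) • W (m+d-1-ν) := by
      rw [h m]
      simp only [smul_eq_C_mul]
      ring
    rw [e]
    simp only [map_add, map_sum, map_smul, hw, smul_eq_mul]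
    rw [if_neg (by omega), if_neg (by omega), Finset.sum_eq_single (d - 1)]
    · have e1 : m + d - 1 - (d - 1) = m := by omega
      have e2 : m + d - (d - 1) = m + 1 := by omega
      simp [e1, e2]
    · intro ν hν hne
      have := Finset.mem_range.mp hν
      rw [if_neg (by omega), mul_zero]
    · intro hn
      exact absurd (Finset.mem_range.mpr (by omega)) hn
  intro j
  constructor
  · intro n hn
    obtain ⟨m, rfl⟩ : ∃ m, n = m + d := ⟨n - d, by omega⟩
    rw [key j m (by omega), if_neg (by omega)]
  · rw [key j j le_rfl, if_pos rfl]
    exact hg j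

/-- The recurrence in uniform form: the sum has `min n d` terms, which covers both the initial
steps `n < d` and the generic ones. -/
lemma recurrence_of_band {d : ℕ} (hW : ∀ n, (W n).Monic ∧ (W n).natDegree = n)
    (hw : ∀ n m, w n (W m) = if n = m then 1 else 0) (h : Band d W w) (n : ℕ) :
    W (n+1) = (X - C (w n (X * W n))) * W n
      - ∑ ν ∈ Finset.range (min n d),
        C (w (n - ν - 1) (X * W ((n - ν) + d - 1 - (d - 1 - ν)))) * W (n - 1 - ν) := by
  have hs : ∑ ν ∈ Finset.range (min n d),
        C (w (n - ν - 1) (X * W ((n - ν) + d - 1 - (d - 1 - ν)))) * W (n - 1 - ν)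
      = ∑ ν ∈ Finset.range (min n d), w (n - 1 - ν) (X * W n) • W (n - 1 - ν) := by
    refine Finset.sum_congr rfl fun ν hν => ?_
    have := Finset.mem_range.mp hν
    have e1 : n - ν - 1 = n - 1 - ν := by omega
    have e2 : n - ν + d - 1 - (d - 1 - ν) = n := by omega
    rw [e1, e2, smul_eq_C_mul]
  rw [hs, sub_mul, ← smul_eq_C_mul]
  refine eq_of_dual_eq hW hw fun j => ?_
  simp only [map_sub, map_sum, map_smul, hw, smul_eq_mul]
  rcases lt_trichotomy j n with hj | rfl | hj
  · rw [if_neg (by omega), if_neg (by omega)]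
    by_cases hjd : n ≤ j + d
    · rw [Finset.sum_eq_single (n - 1 - j)]
      · have e1 : n - 1 - (n - 1 - j) = j := by omega
        simp [e1]
      · intro ν hν hne
        have := Finset.mem_range.mp hν
        rw [if_neg (by omega), mul_zero]
      · intro hn
        exact absurd (Finset.mem_range.mpr (by omega)) hn
    · rw [(h j).1 n (by omega), Finset.sum_eq_zero]
      · simp
      · intro ν hν
        have := Finset.mem_range.mp hν
        rw [if_neg (by omega), mul_zero]
  · rw [if_neg (by omega), if_pos rfl, Finset.sum_eq_zero]
    · simp
    · intro ν hν
      have := Finset.mem_range.mp hν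
      rw [if_neg (by omega), mul_zero]
  · rw [if_neg (by omega : ¬ j = n), Finset.sum_eq_zero]
    · have hlt := degree_X_mul_sub_lt hW n
      have h0 : w j (X * W n - W (n+1)) = 0 :=
        dual_eq_zero_of_degree_lt hW hw (lt_of_lt_of_le hlt (by exact_mod_cast hj))
      rw [map_sub, hw, sub_eq_zero] at h0
      simp [h0]
    · intro ν hν
      have := Finset.mem_range.mp hν
      rw [if_neg (by omega), mul_zero]

/-- Under the band condition, `X^m w_j` is a combination of `w_0, …, w_{md+j}` with nonzero
coefficient at `w_{md+j}`. -/
lemma pow_of_band {d : ℕ} (hW : ∀ n, (W n).Monic ∧ (W n).natDegree = n)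
    (hw : ∀ n m, w n (W m) = if n = m then 1 else 0) (h : Band d W w) (m : ℕ) :
    ∀ j, (∀ n, m * d + j < n → w j (X ^ m * W n) = 0) ∧ w j (X ^ m * W (m * d + j)) ≠ 0 := by
  induction m with
  | zero =>
    intro j
    refine ⟨fun n hn => ?_, ?_⟩
    · rw [pow_zero, one_mul, hw, if_neg (by omega)]
    · simp [hw]
  | succ m ih =>
    intro j
    have key : ∀ n, w j (X ^ (m+1) * W n)
        = ∑ k ∈ Finset.range (j + d + 1), w j (X * W k) * w k (X ^ m * W n) := by
      intro n
      have := functional_expand hW hw ((w j).comp (LinearMap.mulLeft ℂ X)) (j + d + 1)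
        (fun n hn => (h j).1 n (by omega)) (X ^ m * W n)
      simpa [pow_succ', mul_assoc] using this
    refine ⟨fun n hn => ?_, ?_⟩
    · rw [key]
      refine Finset.sum_eq_zero fun k hk => ?_
      have := Finset.mem_range.mp hk
      rw [(ih k).1 n (by rw [Nat.succ_mul] at hn; omega), mul_zero]
    · have e : (m + 1) * d + j = m * d + (j + d) := by ring
      rw [key, Finset.sum_range_succ, Finset.sum_eq_zero, zero_add, e]
      · exact mul_ne_zero (h j).2 (ih (j + d)).2
      · intro k hk
        have := Finset.mem_range.mp hk
        rw [(ih k).1 _ (by omega), mul_zero]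

lemma orthogonal_of_band {d : ℕ} (hd : 1 ≤ d) (hW : ∀ n, (W n).Monic ∧ (W n).natDegree = n)
    (hw : ∀ n m, w n (W m) = if n = m then 1 else 0) (h : Band d W w) (ν : ℕ) :
    (∀ m n, m * d + ν + 1 ≤ n → w ν (W m * W n) = 0) ∧
      (∀ m, w ν (W m * W (m * d + ν)) ≠ 0) := by
  have key : ∀ m n, m * d + ν ≤ n → w ν (W m * W n) = w ν (X ^ m * W n) := by
    intro m n hn
    rw [(hW m).1.as_sum, (hW m).2, add_mul, map_add, Finset.sum_mul, map_sum,
      Finset.sum_eq_zero, add_zero]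
    intro i hi
    have hi' := Finset.mem_range.mp hi
    have hlt : i * d < m * d := Nat.mul_lt_mul_of_pos_right hi' hd
    rw [mul_assoc, ← smul_eq_C_mul, map_smul, (pow_of_band hW hw h i ν).1 n (by omega), smul_zero]
  refine ⟨fun m n hn => ?_, fun m => ?_⟩
  · rw [key m n (by omega)]
    exact (pow_of_band hW hw h m ν).1 n (by omega)
  · rw [key m _ le_rfl]
    exact (pow_of_band hW hw h m ν).2

lemma band_of_orthogonal {d : ℕ} (hd : 1 ≤ d) (hW : ∀ n, (W n).Monic ∧ (W n).natDegree = n)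
    (hw : ∀ n m, w n (W m) = if n = m then 1 else 0)
    (h : ∀ ν, ν < d →
      (∀ m n, m * d + ν + 1 ≤ n → w ν (W m * W n) = 0) ∧
      (∀ m, w ν (W m * W (m * d + ν)) ≠ 0)) : Band d W w := by
  -- Only the top coefficient of `X W_m = W_{m+1} + (lower terms)` matters for large indices.
  have hX : ∀ ν, ν < d → ∀ m n, (m + 1) * d + ν ≤ n →
      w ν (X * W m * W n) = w ν (W (m + 1) * W n) := by
    intro ν hν m n hn
    have hlt := degree_X_mul_sub_lt hW m
    rw [← sub_eq_zero, ← map_sub, ← sub_mul, expand hW hw hlt, Finset.sum_mul, map_sum]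
    refine Finset.sum_eq_zero fun k hk => ?_
    have hk' := Finset.mem_range.mp hk
    have : k * d < (m + 1) * d := Nat.mul_lt_mul_of_pos_right hk' hd
    rw [smul_mul_assoc, map_smul, (h ν hν).1 k n (by omega), smul_zero]
  intro j
  induction j using Nat.strong_induction_on with
  | _ j ih =>
    obtain ⟨m, ν, hν, rfl⟩ : ∃ m ν, ν < d ∧ j = m * d + ν :=
      ⟨j / d, j % d, Nat.mod_lt _ hd, by rw [mul_comm]; exact (Nat.div_add_mod j d).symm⟩
    have hs : m * d + ν + d = (m + 1) * d + ν := by ring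
    have key : ∀ n, m * d + ν + d ≤ n →
        w ν (W (m + 1) * W n) = w ν (W m * W (m * d + ν)) * w (m * d + ν) (X * W n) := by
      intro n hn
      have := functional_expand hW hw ((w ν).comp (LinearMap.mulLeft ℂ (W m))) (m * d + ν + 1)
        (fun n hn => (h ν hν).1 m n hn) (X * W n)
      rw [Finset.sum_range_succ, Finset.sum_eq_zero, zero_add] at this
      · rw [← hX ν hν m n (by omega), mul_comm X (W m), mul_assoc]
        exact this
      · intro k hk
        have hk' := Finset.mem_range.mp hk
        rw [(ih k hk').1 n (by omega), mul_zero]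
    refine ⟨fun n hn => ?_, fun h0 => ?_⟩
    · have h1 := key n hn.le
      rw [(h ν hν).1 (m + 1) n (by omega)] at h1
      exact (mul_eq_zero.mp h1.symm).resolve_left ((h ν hν).2 m)
    · have h1 := key _ le_rfl
      rw [h0, mul_zero, hs] at h1
      exact (h ν hν).2 (m + 1) h1

end DualSequence

theorem stmt_19 (d : ℕ) (hd : 1 ≤ d) (W : ℕ → Polynomial ℂ)
    (hW : ∀ n, (W n).Monic ∧ (W n).natDegree = n)
    (w : ℕ → Module.Dual ℂ (Polynomial ℂ))
    (hw : ∀ n m, w n (W m) = if n = m then 1 else 0) :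
    (∀ ν, ν < d →
      (∀ m n, m * d + ν + 1 ≤ n → w ν (W m * W n) = 0) ∧
      (∀ m, w ν (W m * W (m * d + ν)) ≠ 0))
    ↔
    (∃ β : ℕ → ℂ, ∃ g : ℕ → ℕ → ℂ,
      W 0 = 1 ∧
      W 1 = X - C (β 0) ∧
      (∀ n, 2 ≤ n → n ≤ d → W n = (X - C (β (n-1))) * W (n-1)
          - ∑ ν ∈ Finset.range (n-1), C (g (d-1-ν) (n-1-ν)) * W (n-2-ν)) ∧
      (∀ m, W (m+d+1) = (X - C (β (m+d))) * W (m+d)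
          - ∑ ν ∈ Finset.range d, C (g (d-1-ν) (m+d-ν)) * W (m+d-1-ν)) ∧
      (∀ m, g 0 (m+1) ≠ 0)) := by
  constructor
  · intro h
    have hB := band_of_orthogonal hd hW hw h
    have hrec := recurrence_of_band hW hw hB
    have hW0 : W 0 = 1 := (hW 0).1.natDegree_eq_zero.mp (hW 0).2
    -- With `a = d - 1 - ν` and `k = n - ν`, the coefficient of `W_{k-1}` in `X W_n` is `g a k`.
    refine ⟨fun n => w n (X * W n), fun a k => w (k - 1) (X * W (k + d - 1 - a)), hW0, ?_, ?_,
      ?_, ?_⟩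
    · simpa [hW0] using hrec 0
    · intro n hn hnd
      obtain ⟨n, rfl⟩ : ∃ k, n = k + 1 := ⟨n - 1, by omega⟩
      have h1 := hrec n
      rw [min_eq_left (by omega)] at h1
      exact h1
    · intro m
      have h1 := hrec (m + d)
      rw [min_eq_right (by omega)] at h1
      exact h1
    · intro m
      have e : m + 1 + d - 1 - 0 = m + d := by omega
      simp only [e, Nat.add_sub_cancel]
      exact (hB m).2
  · rintro ⟨β, g, -, -, -, hrec, hg⟩ ν -
    exact orthogonal_of_band hd hW hw (band_of_recurrence hd hw β g hrec hg) ν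
end
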